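/- arXiv:1604.01762 — 7 statements merged into one kernel-verified Lean document; each statement's English description precedes it below -/
import Mathlib

section
/- Let n ≥ 2 and let F : ℝPⁿ → ℝPⁿ be an injective mapping. Let p̄₁, ..., p̄_m ∈ ℝPⁿ with m ≤ n + 1 be projective points in general position, and assume that F maps any projective line passing through one of the points p̄ᵢ onto a projective line. Denote q̄ᵢ = F(p̄ᵢ). Then q̄₁, ..., q̄_m are in general position and F(s̄p{p̄₁, ..., p̄_m}) = s̄p{q̄₁, ..., q̄_m}. -/
open scoped LinearAlgebra.Projectivization

/-- A subset of `ℝPⁿ` (the projectivization of `ℝ^{n+1}`) is a projective line if it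
consists of all projective points lying in a fixed two-dimensional linear subspace. -/
def IsProjLine {n : ℕ} (l : Set (ℙ ℝ (Fin (n + 1) → ℝ))) : Prop :=
  ∃ W : Submodule ℝ (Fin (n + 1) → ℝ), Module.finrank ℝ W = 2 ∧
    l = {p | p.submodule ≤ W}

/-!
A point `z` of the span of the `pᵢ` is reached by finitely many joins: `z` lies on the line through
some `pᵢ` and a point reached in fewer steps. Such lines pass through `pᵢ`, so `F` maps them onto
the lines through the corresponding images, and `F` therefore carries every step of the construction
of the span of the `pᵢ` to a step of the construction of the span of the `F pᵢ`, and conversely.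
If some `F pᵢ` were in the span of the other `F pⱼ`, which is the image of the span of the other
`pⱼ`, injectivity would place `pᵢ` in that span.
-/

section

variable {ι K L V W : Type*} [DivisionRing K] [AddCommGroup V] [Module K V]
  [DivisionRing L] [AddCommGroup W] [Module L W]

/-- A projective line in the projectivization of a vector space over a division ring, as the set
of points of a two-dimensional subspace. It extends `IsProjLine` beyond `ℝPⁿ`. -/
def IsProjectiveLine (l : Set (ℙ K V)) : Prop :=
  ∃ U : Submodule K V, Module.finrank K U = 2 ∧ l = {x | x.submodule ≤ U}

/-- The projective line joining two points, as a set of points. For equal points it is a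
singleton. -/
def lineThrough (x y : ℙ K V) : Set (ℙ K V) :=
  {z | z.submodule ≤ x.submodule ⊔ y.submodule}

theorem left_mem_lineThrough (x y : ℙ K V) : x ∈ lineThrough x y :=
  le_sup_left (a := x.submodule)

theorem right_mem_lineThrough (x y : ℙ K V) : y ∈ lineThrough x y :=
  le_sup_right (a := x.submodule)

theorem lineThrough_subset {x y : ℙ K V} {U : Submodule K V} (hx : x.submodule ≤ U)
    (hy : y.submodule ≤ U) : lineThrough x y ⊆ {z | z.submodule ≤ U} :=
  fun _ hz ↦ hz.trans (sup_le hx hy)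

theorem isAtom_projectivization_submodule (x : ℙ K V) : IsAtom x.submodule :=
  Submodule.isAtom_iff_finrank_eq_one.2 x.finrank_submodule

theorem eq_of_projectivization_submodule_le {x y : ℙ K V} (h : x.submodule ≤ y.submodule) :
    x = y :=
  Projectivization.submodule_injective <|
    ((isAtom_projectivization_submodule y).le_iff_eq
      (isAtom_projectivization_submodule x).ne_bot).1 h

theorem lineThrough_self (x : ℙ K V) : lineThrough x x = {x} :=
  Set.eq_singleton_iff_unique_mem.2 ⟨left_mem_lineThrough x x,
    fun _ hz ↦ eq_of_projectivization_submodule_le (hz.trans_eq (sup_idem _))⟩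

theorem isProjectiveLine_lineThrough {x y : ℙ K V} (h : x ≠ y) :
    IsProjectiveLine (lineThrough x y) := by
  refine ⟨_, ?_, rfl⟩
  have hspan := finrank_span_eq_card (Projectivization.linearIndependent_pair_iff_ne.2 h)
  rwa [Matrix.range_cons_cons_empty, Submodule.span_insert, ← Projectivization.submodule_eq,
    ← Projectivization.submodule_eq, Fintype.card_fin] at hspan

theorem IsProjectiveLine.eq_lineThrough {l : Set (ℙ K V)} (hl : IsProjectiveLine l)
    {x y : ℙ K V} (hx : x ∈ l) (hy : y ∈ l) (h : x ≠ y) : l = lineThrough x y := by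
  obtain ⟨U, hU, rfl⟩ := hl
  obtain ⟨U', hU', hxy⟩ := isProjectiveLine_lineThrough h
  have hx' : x ∈ {z : ℙ K V | z.submodule ≤ U'} := hxy ▸ left_mem_lineThrough x y
  have hy' : y ∈ {z : ℙ K V | z.submodule ≤ U'} := hxy ▸ right_mem_lineThrough x y
  simp only [Set.mem_ofPred_eq, ← Submodule.mem_projectivization_iff_submodule_le]
    at hx hy hx' hy'
  rw [hxy, Projectivization.line_unique h U U' hU hU' hx hy hx' hy']

theorem image_lineThrough {F : ℙ K V → ℙ L W} (hinj : Function.Injective F) {x : ℙ K V}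
    (hline : ∀ l, IsProjectiveLine l → x ∈ l → IsProjectiveLine (F '' l)) (y : ℙ K V) :
    F '' lineThrough x y = lineThrough (F x) (F y) := by
  obtain rfl | h := eq_or_ne x y
  · simp only [lineThrough_self, Set.image_singleton]
  · have hx := left_mem_lineThrough x y
    exact (hline _ (isProjectiveLine_lineThrough h) hx).eq_lineThrough
      (Set.mem_image_of_mem F hx) (Set.mem_image_of_mem F (right_mem_lineThrough x y)) (hinj.ne h)

theorem subset_of_lineThrough_subset {p : ι → ℙ K V} {T : Set (ℙ K V)} (hp : ∀ i, p i ∈ T)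
    (hT : ∀ i, ∀ y ∈ T, lineThrough (p i) y ⊆ T) :
    {x | x.submodule ≤ ⨆ i, (p i).submodule} ⊆ T := by
  suffices h : ∀ v ∈ ⨆ i, (p i).submodule, ∀ hv : v ≠ 0, Projectivization.mk K v hv ∈ T by
    intro x hx
    rw [← x.mk_rep]
    refine h _ (hx ?_) x.rep_nonzero
    rw [x.submodule_eq]
    exact Submodule.mem_span_singleton_self _
  intro v hv
  rw [← Submodule.mem_toAddSubmonoid, Submodule.iSup_toAddSubmonoid,
    AddSubmonoid.iSup_eq_closure] at hv
  induction hv using AddSubmonoid.closure_induction_left with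
  | zero => exact fun h ↦ absurd rfl h
  | add_left a ha b _ ih =>
    intro hab
    obtain ⟨i, hai : a ∈ (p i).submodule⟩ := Set.mem_iUnion.1 ha
    obtain rfl | hb := eq_or_ne b 0
    · have hpi : Projectivization.mk K (a + 0) hab = p i := by
        apply eq_of_projectivization_submodule_le
        rwa [Projectivization.submodule_mk, Submodule.span_singleton_le_iff_mem, add_zero]
      exact hpi ▸ hp i
    · refine hT i _ (ih hb) ?_
      rw [lineThrough, Set.mem_ofPred_eq, Projectivization.submodule_mk,
        Projectivization.submodule_mk, Submodule.span_singleton_le_iff_mem]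
      exact Submodule.add_mem_sup hai (Submodule.mem_span_singleton_self b)

theorem image_setOf_submodule_le_iSup {p : ι → ℙ K V} {F : ℙ K V → ℙ L W}
    (hinj : Function.Injective F)
    (hline : ∀ l, IsProjectiveLine l → (∃ i, p i ∈ l) → IsProjectiveLine (F '' l)) :
    F '' {x | x.submodule ≤ ⨆ i, (p i).submodule} =
      {y | y.submodule ≤ ⨆ i, (F (p i)).submodule} := by
  have hjoin (i : ι) (y : ℙ K V) : F '' lineThrough (p i) y = lineThrough (F (p i)) (F y) :=
    image_lineThrough hinj (fun l hl hi ↦ hline l hl ⟨i, hi⟩) y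
  apply Set.Subset.antisymm
  · refine Set.image_subset_iff.2 (subset_of_lineThrough_subset
      (fun i ↦ le_iSup (fun i ↦ (F (p i)).submodule) i) fun i y hy ↦ ?_)
    rw [← Set.image_subset_iff, hjoin]
    exact lineThrough_subset (le_iSup (fun i ↦ (F (p i)).submodule) i) hy
  · refine subset_of_lineThrough_subset
      (fun i ↦ Set.mem_image_of_mem F (le_iSup (fun i ↦ (p i).submodule) i)) ?_
    rintro i _ ⟨y, hy, rfl⟩
    rw [← hjoin]
    exact Set.image_mono (lineThrough_subset (le_iSup (fun i ↦ (p i).submodule) i) hy)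

theorem linearIndependent_rep_iff_not_submodule_le {p : ι → ℙ K V} :
    LinearIndependent K (fun i ↦ (p i).rep) ↔
      ∀ i, ¬ (p i).submodule ≤ ⨆ j : {j // j ≠ i}, (p j).submodule := by
  refine Projectivization.independent_iff.symm.trans ?_
  simp only [Projectivization.independent_iff_iSupIndep, iSupIndep, iSup_subtype,
    (isAtom_projectivization_submodule _).not_le_iff_disjoint]

theorem linearIndependent_rep_comp {p : ι → ℙ K V}
    (hp : LinearIndependent K (fun i ↦ (p i).rep)) {F : ℙ K V → ℙ L W}
    (hinj : Function.Injective F)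
    (hline : ∀ l, IsProjectiveLine l → (∃ i, p i ∈ l) → IsProjectiveLine (F '' l)) :
    LinearIndependent L (fun i ↦ (F (p i)).rep) := by
  rw [linearIndependent_rep_iff_not_submodule_le] at hp ⊢
  intro i hi
  have himage : F '' {x | x.submodule ≤ ⨆ j : {j // j ≠ i}, (p j).submodule} =
      {y | y.submodule ≤ ⨆ j : {j // j ≠ i}, (F (p j)).submodule} :=
    image_setOf_submodule_le_iSup hinj fun l hl ⟨j, hj⟩ ↦ hline l hl ⟨j, hj⟩
  exact hp i (hinj.mem_set_image.1 (himage.superset hi))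

theorem image_of_projective_span_of_generic_points_general (p : ι → ℙ K V)
    (hp : LinearIndependent K (fun i ↦ (p i).rep)) (F : ℙ K V → ℙ L W)
    (hinj : Function.Injective F)
    (hline : ∀ l, IsProjectiveLine l → (∃ i, p i ∈ l) → IsProjectiveLine (F '' l)) :
    LinearIndependent L (fun i ↦ (F (p i)).rep) ∧
      F '' {x | x.submodule ≤ ⨆ i, (p i).submodule} =
        {y | y.submodule ≤ ⨆ i, (F (p i)).submodule} :=
  ⟨linearIndependent_rep_comp hp hinj hline, image_setOf_submodule_le_iSup hinj hline⟩

end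

/-- **Proposition (images of generic points and of their projective span).**
Let `n ≥ 2` and let `F : ℝPⁿ → ℝPⁿ` be injective. Let `p̄₁,…,p̄_m` (`m ≤ n+1`) be in
general position, and assume every projective line through one of the `p̄ᵢ` is mapped
onto a projective line. Then the points `q̄ᵢ = F p̄ᵢ` are in general position and
`F (s̄p{p̄₁,…,p̄_m}) = s̄p{q̄₁,…,q̄_m}`. -/
theorem image_of_projective_span_of_generic_points
    {n m : ℕ} (hn : 2 ≤ n) (hm : m ≤ n + 1)
    (p : Fin m → ℙ ℝ (Fin (n + 1) → ℝ))
    (hp : LinearIndependent ℝ (fun i => (p i).rep))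
    (F : ℙ ℝ (Fin (n + 1) → ℝ) → ℙ ℝ (Fin (n + 1) → ℝ))
    (hinj : Function.Injective F)
    (hline : ∀ l : Set (ℙ ℝ (Fin (n + 1) → ℝ)), IsProjLine l →
      (∃ i, p i ∈ l) → IsProjLine (F '' l)) :
    LinearIndependent ℝ (fun i => (F (p i)).rep) ∧
    F '' {x | x.submodule ≤ ⨆ i, (p i).submodule} =
      {y | y.submodule ≤ ⨆ i, (F (p i)).submodule} := by
  exact image_of_projective_span_of_generic_points_general p hp F hinj hline
end

section
/- Let n ≥ 2 and let F : ℝⁿ → ℝⁿ be a bijection satisfying F(x) = Σᵢ fᵢ(xᵢ)eᵢ for every x = (x₁, ..., xₙ) ∈ ℝⁿ, where each fᵢ : ℝ → ℝ is a bijection with fᵢ(0) = 0 and fᵢ(1) = 1. Assume that F maps any line through the origin into a line. Then f₁ = f₂ = ⋯ = fₙ, and f₁ is multiplicative. -/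
/-- The line through `a` in direction `b`. -/
def lineThru {k : ℕ} (a b : Fin k → ℝ) : Set (Fin k → ℝ) :=
  {x | ∃ t : ℝ, x = a + t • b}

/-- A subset of `ℝᵏ` is a line if it is of the form `a + ℝ b` with `b ≠ 0`. -/
def IsLine {k : ℕ} (s : Set (Fin k → ℝ)) : Prop :=
  ∃ a b : Fin k → ℝ, b ≠ 0 ∧ s = lineThru a b

/-!
Every point `q` of an image line that contains `0` and a point `p` with `pᵢ = 1` equals `qᵢ • p`.
For a direction `v` with `vᵢ = 1` this gives `F (t • v) = fᵢ t • F v`, and reading off the `j`-th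
coordinate yields `fⱼ (t * c) = fᵢ t * fⱼ c` with `c = vⱼ`, which is arbitrary when `j ≠ i`.
Taking `c = 1` identifies `fⱼ` with `fᵢ`, and the same identity then says that `fᵢ` is
multiplicative.
-/

theorem eq_apply_smul_of_collinear {L V : Type*} [DivisionRing L] [AddCommGroup V] [Module L V]
    {s : Set V} (hs : Collinear L s) (h0 : 0 ∈ s) (φ : V →ₗ[L] L) {p q : V}
    (hp : p ∈ s) (hφp : φ p = 1) (hq : q ∈ s) : q = φ q • p := by
  obtain ⟨b, hb⟩ := (collinear_iff_of_mem h0).1 hs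
  obtain ⟨r, hr⟩ : ∃ r : L, p = r • b := by simpa using hb p hp
  obtain ⟨u, rfl⟩ : ∃ u : L, q = u • b := by simpa using hb q hq
  have hbr : φ b * r = 1 := mul_eq_one_comm.1 (by simpa [hr] using hφp)
  rw [hr, map_smul, smul_eq_mul, smul_smul, mul_assoc, hbr, mul_one]

section PiMap

variable {ι K L : Type*} [Semiring K] [DivisionRing L] {f : ι → K → L}

theorem piMap_smul_of_collinear (h0 : ∀ i, f i 0 = 0) {i : ι} (h1 : f i 1 = 1) {v : ι → K}
    (hvi : v i = 1) (hv : Collinear L (Pi.map f '' (K ∙ v))) (t : K) :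
    Pi.map f (t • v) = f i t • Pi.map f v := by
  have hzero : 0 ∈ Pi.map f '' (K ∙ v) := ⟨0, zero_mem _, funext h0⟩
  have hv_mem : Pi.map f v ∈ Pi.map f '' (K ∙ v) :=
    Set.mem_image_of_mem _ (Submodule.mem_span_singleton_self v)
  have htv_mem : Pi.map f (t • v) ∈ Pi.map f '' (K ∙ v) :=
    Set.mem_image_of_mem _ (Submodule.smul_mem _ t (Submodule.mem_span_singleton_self v))
  have hvi_image : LinearMap.proj (R := L) i (Pi.map f v) = 1 := by simp [hvi, h1]
  simpa [hvi] using
    eq_apply_smul_of_collinear hv hzero (LinearMap.proj i) hv_mem hvi_image htv_mem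

theorem apply_mul_of_collinear_of_ne (h0 : ∀ i, f i 0 = 0) (h1 : ∀ i, f i 1 = 1)
    (hline : ∀ v : ι → K, v ≠ 0 → Collinear L (Pi.map f '' (K ∙ v))) {i j : ι} (hij : i ≠ j)
    (t c : K) : f j (t * c) = f i t * f j c := by
  classical
  let v : ι → K := Function.update 1 j c
  have hvi : v i = 1 := Function.update_of_ne hij c (1 : ι → K)
  have hvj : v j = c := Function.update_self j c (1 : ι → K)
  have hv : v ≠ 0 := fun h => one_ne_zero (α := L) <| by
    rw [← h1 i, ← hvi, h, Pi.zero_apply, h0]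
  simpa [hvj] using congrFun (piMap_smul_of_collinear h0 (h1 i) hvi (hline v hv) t) j

theorem diagonal_linesThruOrigin_multiplicative_general [Nontrivial ι]
    (h0 : ∀ i, f i 0 = 0) (h1 : ∀ i, f i 1 = 1)
    (hline : ∀ v : ι → K, v ≠ 0 → Collinear L (Pi.map f '' (K ∙ v))) :
    (∀ i j : ι, f i = f j) ∧ ∀ (i : ι) (a b : K), f i (a * b) = f i a * f i b := by
  have hmul {i j : ι} (hij : i ≠ j) (t c : K) : f j (t * c) = f i t * f j c :=
    apply_mul_of_collinear_of_ne h0 h1 hline hij t c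
  have heq (i j : ι) : f i = f j := by
    obtain rfl | hij := eq_or_ne i j
    · rfl
    · funext t
      simpa [h1] using (hmul hij t 1).symm
  refine ⟨heq, fun i a b => ?_⟩
  obtain ⟨j, hji⟩ := exists_ne i
  rw [hmul hji, heq j i]

end PiMap

theorem lineThru_zero_eq_span {k : ℕ} (b : Fin k → ℝ) :
    lineThru 0 b = (ℝ ∙ b : Set (Fin k → ℝ)) := by
  ext x
  simp [lineThru, Submodule.mem_span_singleton, eq_comm]

theorem collinear_lineThru {k : ℕ} (a b : Fin k → ℝ) : Collinear ℝ (lineThru a b) :=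
  (collinear_iff_exists_forall_eq_smul_vadd _).2
    ⟨a, b, fun _ ⟨t, hx⟩ => ⟨t, hx.trans (add_comm _ _)⟩⟩

/-- **Lemma (diagonal bijections preserving lines through the origin).**
Let `n ≥ 2` and let `F : ℝⁿ → ℝⁿ` be a bijection of the form `F x = ∑ fᵢ (xᵢ) • eᵢ`
where each `fᵢ : ℝ → ℝ` is a bijection with `fᵢ 0 = 0` and `fᵢ 1 = 1`. If `F` maps
every line through the origin into a line, then all the `fᵢ` coincide and they are
multiplicative. -/
theorem diagonal_linesThruOrigin_multiplicative
    {n : ℕ} (hn : 2 ≤ n)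
    (F : (Fin n → ℝ) → (Fin n → ℝ)) (hbij : Function.Bijective F)
    (f : Fin n → ℝ → ℝ)
    (hf : ∀ i, Function.Bijective (f i) ∧ f i 0 = 0 ∧ f i 1 = 1)
    (hF : ∀ x : Fin n → ℝ, F x = ∑ i, f i (x i) • (Pi.single i 1 : Fin n → ℝ))
    (hline : ∀ b : Fin n → ℝ, b ≠ 0 →
      ∃ l : Set (Fin n → ℝ), IsLine l ∧ F '' lineThru 0 b ⊆ l) :
    (∀ i j : Fin n, f i = f j) ∧
    ∀ (i : Fin n) (a b : ℝ), f i (a * b) = f i a * f i b := by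
  have hFf : F = Pi.map f := funext fun x => (hF x).trans (pi_eq_sum_univ' (Pi.map f x)).symm
  have : Nontrivial (Fin n) := Fin.nontrivial_iff_two_le.2 hn
  refine diagonal_linesThruOrigin_multiplicative_general
    (fun i => (hf i).2.1) (fun i => (hf i).2.2) fun v hv => ?_
  obtain ⟨_, ⟨a, b, -, rfl⟩, hl⟩ := hline v hv
  rw [← hFf, ← lineThru_zero_eq_span]
  exact (collinear_lineThru a b).subset hl
end

section
/- Let f : ℝ → ℝ be a multiplicative injection, and assume that the function g defined by g(x) = f(x + 1) − 1 is also multiplicative. Then f(x) = x for every x ∈ ℝ. -/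
/-!
Multiplicativity of `x ↦ f (x + 1) - 1` at the pair `(-1, x)` says that the graph of `f` is
symmetric about the point `(1, 1)`: `f (1 + x) + f (1 - x) = 2`. Since `f` is multiplicative,
scaling `1 ± a⁻¹ b` by `a` turns this into Jensen's equation `f (a + b) + f (a - b) = 2 f a`, and
`f 2 = 2` turns Jensen's equation into additivity. So `f` is a ring homomorphism, and the only ring
endomorphism of `ℝ` is the identity.
-/

/-- The graph of `f` is invariant under the point reflection in `(1, 1)`; equivalently, the shifted
function `x ↦ f (x + 1) - 1` is odd. The condition is written without subtracting values of `f`. -/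
def PointSymmetricAtOne {R S : Type*} [Ring R] [Ring S] (f : R → S) : Prop :=
  ∀ x, f (1 + x) + f (1 - x) = 2

namespace PointSymmetricAtOne

section Ring

variable {R S : Type*} [Ring R] [Ring S]

theorem map_one [NoZeroDivisors S] [NeZero (2 : S)] {f : R → S} (hf : PointSymmetricAtOne f) :
    f 1 = 1 := by
  have h : 2 * f 1 = 2 * 1 := by simpa [two_mul, one_add_one_eq_two] using hf 0
  exact mul_left_cancel₀ two_ne_zero h

theorem map_two {f : R → S} (hf : PointSymmetricAtOne f) (hzero : f 0 = 0) : f 2 = 2 := by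
  simpa [one_add_one_eq_two, hzero] using hf 1

variable [NoZeroDivisors S] [NeZero (2 : S)] {f : R →*₀ S}

theorem map_neg_one (hf : PointSymmetricAtOne f) : f (-1) = -1 := by
  have h_four : f (1 + 3) = 4 := by
    rw [show (1 + 3 : R) = 2 * 2 by norm_num, map_mul, hf.map_two (map_zero f)]
    norm_num
  have h_neg_two : f (1 - 3) = 2 * f (-1) := by
    rw [show (1 - 3 : R) = 2 * -1 by norm_num, map_mul, hf.map_two (map_zero f)]
  have h : 4 + 2 * f (-1) = 2 := by rw [← h_four, ← h_neg_two, hf 3]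
  refine mul_left_cancel₀ two_ne_zero (?_ : 2 * f (-1) = 2 * -1)
  rw [eq_sub_of_add_eq' h]
  norm_num

theorem map_neg (hf : PointSymmetricAtOne f) (x : R) : f (-x) = -f x := by
  rw [← neg_one_mul, map_mul, hf.map_neg_one, neg_one_mul]

end Ring

section DivisionRing

variable {K S : Type*} [DivisionRing K] [Ring S] [NoZeroDivisors S] [NeZero (2 : S)] {f : K →*₀ S}

theorem map_add_add_map_sub (hf : PointSymmetricAtOne f) (a b : K) :
    f (a + b) + f (a - b) = 2 * f a := by
  obtain rfl | ha := eq_or_ne a 0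
  · simp [hf.map_neg]
  · calc f (a + b) + f (a - b) = f (a * (1 + a⁻¹ * b)) + f (a * (1 - a⁻¹ * b)) := by
          simp only [mul_add, mul_sub, mul_one, mul_inv_cancel_left₀ ha]
      _ = f a * (f (1 + a⁻¹ * b) + f (1 - a⁻¹ * b)) := by rw [map_mul, map_mul, mul_add]
      _ = 2 * f a := by rw [hf, mul_two, two_mul]

theorem map_add (hf : PointSymmetricAtOne f) (a b : K) : f (a + b) = f a + f b := by
  have map_two_mul (x : K) : f (2 * x) = 2 * f x := by
    rw [map_mul, hf.map_two (map_zero f)]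
  refine mul_left_cancel₀ two_ne_zero (?_ : 2 * f (a + b) = 2 * (f a + f b))
  calc 2 * f (a + b) = f (a + b + (a - b)) + f (a + b - (a - b)) :=
        (hf.map_add_add_map_sub _ _).symm
    _ = f (2 * a) + f (2 * b) := by
        rw [add_add_sub_cancel, add_sub_sub_cancel, two_mul, two_mul]
    _ = 2 * (f a + f b) := by rw [map_two_mul, map_two_mul, mul_add]

end DivisionRing

end PointSymmetricAtOne

theorem map_zero_of_map_mul_of_ne_one {M N : Type*} [MulZeroClass M] [MonoidWithZero N]
    [IsLeftCancelMulZero N] {f : M → N} (hmul : ∀ a b, f (a * b) = f a * f b) (hf : f ≠ 1) :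
    f 0 = 0 := by
  by_contra h
  refine hf (funext fun x => (mul_eq_left₀ h).mp ?_)
  rw [← hmul, zero_mul]

theorem pointSymmetricAtOne_of_multiplicative_shift {R S : Type*} [Ring R] [Ring S] {f : R → S}
    (hzero : f 0 = 0) (hshift : ∀ a b, f (a * b + 1) - 1 = (f (a + 1) - 1) * (f (b + 1) - 1)) :
    PointSymmetricAtOne f := fun x => by
  have h : f (1 - x) - 1 = -(f (1 + x) - 1) := by
    simpa [hzero, neg_add_eq_sub, add_comm x] using hshift (-1) x
  rw [eq_add_of_sub_eq h, neg_sub, ← one_add_one_eq_two]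
  abel

theorem eq_id_of_multiplicative_shift_general {K S : Type*} [DivisionRing K] [Ring S]
    [NoZeroDivisors S] [NeZero (2 : S)] {f : K → S} (hf : f ≠ 1)
    (hmul : ∀ a b, f (a * b) = f a * f b)
    (hshift : ∀ a b, f (a * b + 1) - 1 = (f (a + 1) - 1) * (f (b + 1) - 1)) :
    ∃ φ : K →+* S, ⇑φ = f := by
  have hzero : f 0 = 0 := map_zero_of_map_mul_of_ne_one hmul hf
  have hsymm : PointSymmetricAtOne f := pointSymmetricAtOne_of_multiplicative_shift hzero hshift
  let F : K →*₀ S := ⟨⟨f, hzero⟩, hsymm.map_one, hmul⟩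
  have hF : PointSymmetricAtOne F := hsymm
  exact ⟨{ F with map_add' := hF.map_add }, rfl⟩

/-- **Lemma (two multiplicative functions force the identity).**
If `f : ℝ → ℝ` is an injective multiplicative function such that
`g x = f (x + 1) - 1` is also multiplicative, then `f` is the identity. -/
theorem eq_id_of_multiplicative_shift
    (f : ℝ → ℝ) (hinj : Function.Injective f)
    (hmul : ∀ a b : ℝ, f (a * b) = f a * f b)
    (g : ℝ → ℝ) (hg : ∀ x : ℝ, g x = f (x + 1) - 1)
    (hgmul : ∀ a b : ℝ, g (a * b) = g a * g b) :
    ∀ x : ℝ, f x = x := by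
  obtain ⟨φ, rfl⟩ := eq_id_of_multiplicative_shift_general
    (fun h => zero_ne_one (hinj (by simp [h]))) hmul (by simpa only [hg] using hgmul)
  exact DFunLike.congr_fun (Subsingleton.elim φ (RingHom.id ℝ))
end

section
/- Let f : ℝ → ℝ be a multiplicative injection (note that then f(2) ≠ 1, since f(1) = 1 and f is injective). Assume that the function g defined by g(x) = (f(x + 1) − 1)/(f(2) − 1) is also multiplicative. Then f(x) = x for every x ∈ ℝ. -/
/-!
Since `g (-1) ^ 2 = g 1 = 1`, the number `f 2 - 1 = -(g (-1))⁻¹` is `1` or `-1`, and `f 2 = 0` is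
impossible, so `f 2 = 2` and `g (-1) = -1`. Hence `g` is odd, which means that `f` commutes with the
reflection `x ↦ 2 - x`. Comparing `f (-2) = 2 - f 4 = -2` with `f (-2) = f (-1) * f 2` gives
`f (-1) = -1`, so `f` is odd and therefore commutes with the translation `x ↦ x + 2`. Conjugating
this translation by a dilation gives every other one, so `f` is additive. The only ring
endomorphism of `ℝ` is the identity.
-/

section MapMul

variable {M N : Type*} {f : M → N}

theorem map_one_of_map_mul [MulOneClass M] [MonoidWithZero N] [IsLeftCancelMulZero N]
    (hmul : ∀ a b, f (a * b) = f a * f b) (hf : f ≠ 0) : f 1 = 1 := by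
  obtain ⟨a, ha⟩ := Function.ne_iff.mp hf
  exact (mul_eq_left₀ ha).mp (by rw [← hmul, mul_one])

theorem map_zero_of_map_mul [MulZeroClass M] [MonoidWithZero N] [IsLeftCancelMulZero N]
    (hmul : ∀ a b, f (a * b) = f a * f b) {a : M} (ha : f a ≠ 1) : f 0 = 0 :=
  eq_zero_of_mul_eq_self_right ha (by rw [← hmul, zero_mul])

end MapMul

section NormalizedShift

variable {A L : Type*} [AddCommGroupWithOne A] [DivisionRing L] {f g : A → L}

theorem map_two_of_normalized_shift (hf0 : f 0 = 0)
    (hf2_ne_zero : f 2 ≠ 0) (hf2_ne_one : f 2 ≠ 1)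
    (hg : ∀ x, g x = (f (x + 1) - 1) / (f 2 - 1)) (hgneg : ∀ x, g (-x) = g (-1) * g x) :
    f 2 = 2 := by
  have hc : f 2 - 1 ≠ 0 := sub_ne_zero.mpr hf2_ne_one
  have hg1 : g 1 = 1 := by rw [hg, one_add_one_eq_two, div_self hc]
  have hgm1 : g (-1) * (f 2 - 1) = -1 := by
    rw [hg, neg_add_cancel, hf0, zero_sub, div_mul_cancel₀ _ hc]
  have hsq : g (-1) * g (-1) = 1 := by rw [← hgneg, neg_neg, hg1]
  rcases mul_self_eq_one_iff.mp hsq with h | h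
  · rw [h, one_mul, sub_eq_neg_self] at hgm1
    exact absurd hgm1 hf2_ne_zero
  · rw [h, neg_one_mul, neg_inj, sub_eq_iff_eq_add, one_add_one_eq_two] at hgm1
    exact hgm1

theorem map_two_sub_of_normalized_shift (hf0 : f 0 = 0)
    (hf2_ne_zero : f 2 ≠ 0) (hf2_ne_one : f 2 ≠ 1)
    (hg : ∀ x, g x = (f (x + 1) - 1) / (f 2 - 1)) (hgneg : ∀ x, g (-x) = g (-1) * g x) (x : A) :
    f (2 - x) = 2 - f x := by
  have hg' (y : A) : g (y - 1) = f y - 1 := by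
    rw [hg, map_two_of_normalized_shift hf0 hf2_ne_zero hf2_ne_one hg hgneg, sub_add_cancel,
      ← one_add_one_eq_two, add_sub_cancel_right, div_one]
  have hgm1 : g (-1) = -1 := by simpa [hf0] using hg' 0
  have hreflect : f (2 - x) - 1 = -(f x - 1) := by
    rw [← hg', ← hg', ← neg_one_mul, ← hgm1, ← hgneg, ← one_add_one_eq_two]
    congr 1
    abel
  rw [sub_eq_iff_eq_add.mp hreflect, ← one_add_one_eq_two]
  abel

end NormalizedShift

section Reflection

variable {R S : Type*} [Ring R] [Ring S] {f : R →*₀ S}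

theorem map_two_of_map_two_sub (hf : ∀ x, f (2 - x) = 2 - f x) : f 2 = 2 := by
  simpa using hf 0

theorem map_neg_one_of_map_two_sub (h2 : IsUnit (2 : R)) (hf : ∀ x, f (2 - x) = 2 - f x) :
    f (-1) = -1 := by
  have hf2 : f 2 = 2 := map_two_of_map_two_sub hf
  refine (h2.map f).mul_right_cancel ?_
  calc f (-1) * f 2 = f (2 - 2 * 2) := by rw [← map_mul]; norm_num
    _ = 2 - 2 * 2 := by rw [hf, map_mul, hf2]
    _ = -1 * f 2 := by rw [hf2]; norm_num

theorem map_neg_of_map_two_sub (h2 : IsUnit (2 : R)) (hf : ∀ x, f (2 - x) = 2 - f x) (x : R) :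
    f (-x) = -f x := by
  rw [← neg_one_mul, map_mul, map_neg_one_of_map_two_sub h2 hf, neg_one_mul]

theorem map_add_two_of_map_two_sub (h2 : IsUnit (2 : R)) (hf : ∀ x, f (2 - x) = 2 - f x) (x : R) :
    f (x + 2) = f x + 2 := by
  rw [add_comm, ← sub_neg_eq_add, hf, map_neg_of_map_two_sub h2 hf, sub_neg_eq_add, add_comm]

end Reflection

theorem map_add_of_map_two_sub {K S : Type*} [DivisionRing K] [NeZero (2 : K)] [Ring S]
    {f : K →*₀ S} (hf : ∀ x, f (2 - x) = 2 - f x) (x y : K) : f (x + y) = f x + f y := by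
  have h2 : (2 : K) ≠ 0 := two_ne_zero
  rcases eq_or_ne y 0 with rfl | hy
  · rw [add_zero, map_zero, add_zero]
  obtain ⟨z, rfl⟩ : ∃ z, z * 2 = y := ⟨y / 2, div_mul_cancel₀ y h2⟩
  have hz : z ≠ 0 := left_ne_zero_of_mul hy
  calc f (x + z * 2) = f (z * (z⁻¹ * x + 2)) := by rw [mul_add, mul_inv_cancel_left₀ hz]
    _ = f z * (f (z⁻¹ * x) + 2) := by rw [map_mul, map_add_two_of_map_two_sub h2.isUnit hf]
    _ = f (z * (z⁻¹ * x)) + f (z * 2) := by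
      rw [mul_add, map_mul f z (z⁻¹ * x), map_mul f z 2, map_two_of_map_two_sub hf]
    _ = f x + f (z * 2) := by rw [mul_inv_cancel_left₀ hz]

theorem eq_id_of_multiplicative_normalized_shift_general {K L : Type*}
    [DivisionRing K] [NeZero (2 : K)] [DivisionRing L] {f g : K → L} (hf : f ≠ 0) (hf2 : f 2 ≠ 1)
    (hmul : ∀ a b, f (a * b) = f a * f b)
    (hg : ∀ x, g x = (f (x + 1) - 1) / (f 2 - 1)) (hgneg : ∀ x, g (-x) = g (-1) * g x) :
    ∃ φ : K →+* L, ⇑φ = f := by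
  let F : K →*₀ L :=
    { toFun := f
      map_zero' := map_zero_of_map_mul hmul hf2
      map_one' := map_one_of_map_mul hmul hf
      map_mul' := hmul }
  have hF2 : F 2 ≠ 0 := (map_ne_zero F).mpr two_ne_zero
  have hreflect : ∀ x, F (2 - x) = 2 - F x :=
    map_two_sub_of_normalized_shift (map_zero F) hF2 hf2 hg hgneg
  exact ⟨{ F with map_add' := map_add_of_map_two_sub hreflect }, rfl⟩

/-- **Lemma (normalized shift of a multiplicative injection).**
Let `f : ℝ → ℝ` be an injective multiplicative function (so `f 1 = 1` and `f 2 ≠ 1`).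
If `g x = (f (x + 1) - 1) / (f 2 - 1)` is also multiplicative, then `f` is the
identity. -/
theorem eq_id_of_multiplicative_normalized_shift
    (f : ℝ → ℝ) (hinj : Function.Injective f)
    (hmul : ∀ a b : ℝ, f (a * b) = f a * f b)
    (g : ℝ → ℝ) (hg : ∀ x : ℝ, g x = (f (x + 1) - 1) / (f 2 - 1))
    (hgmul : ∀ a b : ℝ, g (a * b) = g a * g b) :
    ∀ x : ℝ, f x = x := by
  have hf : f ≠ 0 := fun h => zero_ne_one (hinj (by simp only [h, Pi.zero_apply]))
  have hf2 : f 2 ≠ 1 := map_one_of_map_mul hmul hf ▸ hinj.ne (OfNat.ofNat_ne_one 2)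
  have hgneg (x : ℝ) : g (-x) = g (-1) * g x := by rw [← hgmul, neg_one_mul]
  obtain ⟨φ, rfl⟩ := eq_id_of_multiplicative_normalized_shift_general hf hf2 hmul hg hgneg
  exact DFunLike.congr_fun (Subsingleton.elim φ (RingHom.id ℝ))
end

section
/- Let n ≥ 2 and let F : ℝⁿ → ℝⁿ be an additive bijection. Assume that F maps any line passing through a given point x₀ ∈ ℝⁿ into a line. Then F is affine; equivalently, since F is additive with F(0) = 0, F is ℝ-linear. -/
/-!
Let `F` be an additive map whose image is not contained in a line, and let `F` map each line through
`x₀` into a line. Then `F (t • v)` is a multiple of `F v`. This is clear if `F v ≠ 0`. If `F v = 0`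
then `F (w + v) = F w` for every `w`, so `F (t • v) = F (t • (w + v)) - F (t • w)` is a multiple of
`F w` whenever `F w ≠ 0`; since `F w` can be chosen off the line spanned by `F (t • v)`, this forces
`F (t • v) = 0`.

Hence the additive maps `v ↦ F (t • v)` and `F` are pointwise proportional. Comparing the factors at
`v`, `w` and `v + w` for independent `F v` and `F w` shows that the factor `σ t` does not depend on
`v`. The function `σ` is a ring homomorphism, and the only ring endomorphism of `ℝ` is the identity.
-/

section DivisionRing

variable {L W : Type*} [DivisionRing L] [AddCommGroup W] [Module L W]

theorem linearIndependent_pair_of_notMem_span_singleton {x y : W} (hx : x ≠ 0)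
    (hy : y ∉ Submodule.span L {x}) : LinearIndependent L ![x, y] :=
  (LinearIndependent.pair_iff' hx).2 fun a ha ↦ hy (Submodule.mem_span_singleton.2 ⟨a, ha⟩)

theorem exists_mem_notMem_span_singleton_of_not_collinear {s : Set W} (hs : ¬ Collinear L s)
    (y : W) : ∃ x ∈ s, x ∉ Submodule.span L {y} := by
  contrapose! hs
  refine (collinear_iff_exists_forall_eq_smul_vadd s).2 ⟨0, y, fun x hx ↦ ?_⟩
  obtain ⟨r, rfl⟩ := Submodule.mem_span_singleton.1 (hs x hx)
  exact ⟨r, by simp⟩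

theorem not_collinear_range_of_surjective {ι : Type*} {f : ι → W} (hf : Function.Surjective f)
    (hW : 1 < Module.rank L W) : ¬ Collinear L (Set.range f) := by
  rw [hf.range_eq, Collinear, ← direction_affineSpan, AffineSubspace.span_univ,
    AffineSubspace.direction_top, rank_top]
  exact hW.not_ge

section PointwiseProportional

variable {V : Type*} [AddCommGroup V] {F G : V →+ W}

theorem eq_smul_of_linearIndependent_of_forall_mem_span_singleton
    (hG : ∀ v, G v ∈ Submodule.span L {F v}) {v w : V} (hvw : LinearIndependent L ![F v, F w])
    {c : L} (hv : G v = c • F v) : G w = c • F w := by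
  obtain ⟨d, hd⟩ := Submodule.mem_span_singleton.1 (hG (v + w))
  obtain ⟨e, he⟩ := Submodule.mem_span_singleton.1 (hG w)
  have hsum : d • F v + d • F w = c • F v + e • F w := by
    rw [← smul_add, ← map_add, hd, map_add, hv, he]
  obtain ⟨hdc, hde⟩ := hvw.eq_of_pair hsum
  rw [← he, ← hde, hdc]

theorem exists_forall_eq_smul_of_forall_mem_span_singleton
    (hF : ¬ Collinear L (Set.range F)) (hG : ∀ v, G v ∈ Submodule.span L {F v}) :
    ∃ c : L, ∀ v, G v = c • F v := by
  obtain ⟨_, ⟨u, rfl⟩, hu⟩ := exists_mem_notMem_span_singleton_of_not_collinear hF 0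
  have hu0 : F u ≠ 0 := by simpa using hu
  obtain ⟨_, ⟨w, rfl⟩, hw⟩ := exists_mem_notMem_span_singleton_of_not_collinear hF (F u)
  obtain ⟨c, hc⟩ := Submodule.mem_span_singleton.1 (hG u)
  have transfer {x y : V} := eq_smul_of_linearIndependent_of_forall_mem_span_singleton
    hG (v := x) (w := y) (c := c)
  have hcw : G w = c • F w :=
    transfer (linearIndependent_pair_of_notMem_span_singleton hu0 hw) hc.symm
  refine ⟨c, fun v ↦ ?_⟩
  by_cases hv0 : F v = 0
  · simpa [hv0] using hG v
  by_cases hvu : F v ∈ Submodule.span L {F u}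
  · have hwv : F w ∉ Submodule.span L {F v} := fun h ↦
      hw ((Submodule.span_singleton_le_iff_mem _ _).2 hvu h)
    have hind := linearIndependent_pair_of_notMem_span_singleton hv0 hwv
    exact transfer (LinearIndependent.pair_symm_iff.1 hind) hcw
  · exact transfer (linearIndependent_pair_of_notMem_span_singleton hu0 hvu) hc.symm

end PointwiseProportional

section Semilinear

variable {K V : Type*} [Semiring K] [AddCommGroup V] [Module K V] {F : V →+ W}

theorem exists_ringHom_forall_map_smul (hF : F ≠ 0)
    (h : ∀ t : K, ∃ c : L, ∀ v, F (t • v) = c • F v) :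
    ∃ σ : K →+* L, ∀ t v, F (t • v) = σ t • F v := by
  choose σ hσ using h
  obtain ⟨u, hu⟩ := DFunLike.ne_iff.1 hF
  have cancel {a b : L} (hab : a • F u = b • F u) : a = b := smul_left_injective L hu hab
  refine ⟨{ toFun := σ, map_one' := cancel ?_, map_mul' := fun s t ↦ cancel ?_,
            map_zero' := cancel ?_, map_add' := fun s t ↦ cancel ?_ }, hσ⟩
  · rw [← hσ, one_smul, one_smul]
  · rw [← hσ, mul_smul, hσ, hσ, mul_smul]
  · rw [← hσ, zero_smul, zero_smul, map_zero]
  · rw [← hσ, add_smul, map_add, hσ, hσ, add_smul]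

theorem map_smul_mem_span_singleton_of_ne_zero {x₀ v : V} (hv : F v ≠ 0)
    (hline : Collinear L (Set.range fun t : K ↦ F (x₀ + t • v))) (t : K) :
    F (t • v) ∈ Submodule.span L {F v} := by
  have mem_range (s : K) : F (x₀ + s • v) ∈ Set.range fun t : K ↦ F (x₀ + t • v) := ⟨s, rfl⟩
  have hne : F (x₀ + (0 : K) • v) ≠ F (x₀ + (1 : K) • v) := by simpa [eq_comm] using hv
  have hspan := AffineSubspace.vsub_mem_direction
    (hline.mem_affineSpan_of_mem_of_ne (mem_range 0) (mem_range 1) (mem_range t) hne)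
    (left_mem_affineSpan_pair L _ _)
  simpa [direction_affineSpan, vectorSpan_pair_rev] using hspan

theorem map_smul_mem_span_singleton {x₀ : V} (hF : ¬ Collinear L (Set.range F))
    (hline : ∀ v ≠ 0, Collinear L (Set.range fun t : K ↦ F (x₀ + t • v))) (t : K) (v : V) :
    F (t • v) ∈ Submodule.span L {F v} := by
  have mem_of_ne_zero {w : V} (hw : F w ≠ 0) : F (t • w) ∈ Submodule.span L {F w} :=
    map_smul_mem_span_singleton_of_ne_zero hw (hline w fun h ↦ hw (by rw [h, map_zero])) t
  by_cases hv : F v = 0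
  · suffices F (t • v) = 0 by simp [this]
    by_contra htv
    obtain ⟨_, ⟨w, rfl⟩, hw⟩ :=
      exists_mem_notMem_span_singleton_of_not_collinear hF (F (t • v))
    have hw0 : F w ≠ 0 := fun h ↦ hw (h ▸ Submodule.zero_mem _)
    have hwv : F (w + v) = F w := by rw [map_add, hv, add_zero]
    have hmem : F (t • v) ∈ Submodule.span L {F w} := by
      have hsub := Submodule.sub_mem _ (hwv ▸ mem_of_ne_zero (hwv ▸ hw0)) (mem_of_ne_zero hw0)
      rwa [← map_sub, smul_add, add_sub_cancel_left] at hsub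
    obtain ⟨a, ha⟩ := Submodule.mem_span_singleton.1 hmem
    have hind := linearIndependent_pair_of_notMem_span_singleton htv hw
    exact (LinearIndependent.pair_iff' hw0).1 (LinearIndependent.pair_symm_iff.1 hind) a ha
  · exact mem_of_ne_zero hv

theorem exists_ringHom_forall_map_smul_of_collinear {x₀ : V} (hF : ¬ Collinear L (Set.range F))
    (hline : ∀ v ≠ 0, Collinear L (Set.range fun t : K ↦ F (x₀ + t • v))) :
    ∃ σ : K →+* L, ∀ t v, F (t • v) = σ t • F v := by
  have hF0 : F ≠ 0 := by
    rintro rfl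
    exact hF ((collinear_singleton L 0).subset (by rintro _ ⟨v, rfl⟩; rfl))
  refine exists_ringHom_forall_map_smul hF0 fun t ↦ ?_
  exact exists_forall_eq_smul_of_forall_mem_span_singleton
    (G := F.comp (DistribSMul.toAddMonoidHom V t)) hF (map_smul_mem_span_singleton hF hline t)

end Semilinear

theorem linear_of_additive_linesThruPoint_general {V : Type*} [AddCommGroup V] [Module L V]
    [Subsingleton (L →+* L)] (F : V →+ W) (hF : ¬ Collinear L (Set.range F)) (x₀ : V)
    (hline : ∀ v ≠ 0, Collinear L (Set.range fun t : L ↦ F (x₀ + t • v))) :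
    IsLinearMap L F := by
  obtain ⟨σ, hσ⟩ := exists_ringHom_forall_map_smul_of_collinear hF hline
  obtain rfl : σ = RingHom.id L := Subsingleton.elim _ _
  exact ⟨map_add F, hσ⟩

end DivisionRing

theorem image_lineThru {k : ℕ} {α : Type*} (f : (Fin k → ℝ) → α) (a b : Fin k → ℝ) :
    f '' lineThru a b = Set.range fun t : ℝ ↦ f (a + t • b) := by
  ext
  simp [lineThru]

theorem IsLine.collinear {k : ℕ} {s : Set (Fin k → ℝ)} (hs : IsLine s) : Collinear ℝ s := by
  obtain ⟨a, b, -, rfl⟩ := hs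
  refine (collinear_iff_exists_forall_eq_smul_vadd _).2 ⟨a, b, ?_⟩
  rintro _ ⟨t, rfl⟩
  exact ⟨t, add_comm _ _⟩

/-- **Lemma (an additive bijection preserving lines through one point is linear).**
Let `n ≥ 2` and let `F : ℝⁿ → ℝⁿ` be an additive bijection that maps every line
through a given point `x₀` into a line. Then `F` is `ℝ`-linear (equivalently, affine,
since `F 0 = 0`). -/
theorem linear_of_additive_linesThruPoint
    {n : ℕ} (hn : 2 ≤ n)
    (F : (Fin n → ℝ) → (Fin n → ℝ)) (hbij : Function.Bijective F)
    (hadd : ∀ x y : Fin n → ℝ, F (x + y) = F x + F y)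
    (x₀ : Fin n → ℝ)
    (hline : ∀ b : Fin n → ℝ, b ≠ 0 →
      ∃ l : Set (Fin n → ℝ), IsLine l ∧ F '' lineThru x₀ b ⊆ l) :
    IsLinearMap ℝ F := by
  have hF : ¬ Collinear ℝ (Set.range F) :=
    not_collinear_range_of_surjective hbij.surjective (by simpa using Nat.lt_of_succ_le hn)
  refine linear_of_additive_linesThruPoint_general (AddMonoidHom.mk' F hadd) hF x₀ fun b hb ↦ ?_
  obtain ⟨l, hl, hsub⟩ := hline b hb
  exact hl.collinear.subset (image_lineThru F x₀ b ▸ hsub)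
end

section
/- Let F : ℝⁿ → ℝⁿ be a continuous bijective mapping, and suppose that F maps a certain line l into a line (i.e., F(l) is contained in some line). Then F maps l onto a line, i.e., F(l) equals some line. -/
/-!
Invariance of domain makes `F` a homeomorphism. Composed with an affine parametrization of the
line, it is a closed embedding of `ℝ` into a copy of `ℝ`; its image is closed, and open by
invariance of domain again, hence everything.

Invariance of domain is derived from Brouwer's fixed point theorem. If an injective continuous `f`
on the unit ball misses a point `c` near `f 0`, extend `f⁻¹` to a continuous `g` on the whole space
and push `f x` radially away from `c`. After a small perturbation, `g` has no zero on the set of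
pushed points, although `x ↦ g (pushOut c ε (f x))` stays close to the identity, which contradicts
Brouwer's theorem.

Brouwer's theorem reduces to the absence of `C¹` retractions `r` of the unit ball onto its sphere.
For small `t > 0` the map `x ↦ x + t • (r x - x)` is a diffeomorphism of the open ball, so the
integral of its Jacobian determinant is the volume of the ball. As that integral is polynomial in
`t`, the same holds at `t = 1`, where the determinant vanishes identically.
-/

open Filter Function Metric MeasureTheory Module Polynomial Set Topology
open scoped NNReal

section IntegralOfPolynomials

variable {α : Type*} [MeasurableSpace α] {μ : Measure α}

theorem exists_polynomial_eval_eq_integral {n : ℕ} {p : α → ℝ[X]}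
    (hdeg : ∀ a, (p a).natDegree ≤ n) (hint : ∀ t : ℝ, Integrable (fun a => (p a).eval t) μ) :
    ∃ q : ℝ[X], ∀ t, q.eval t = ∫ a, (p a).eval t ∂μ := by
  let nodes := Finset.range (n + 1)
  let v : ℕ → ℝ := (↑)
  have hv : Set.InjOn v nodes := Nat.cast_injective.injOn
  have hp (a : α) : p a = Lagrange.interpolate nodes v fun i => (p a).eval (v i) := by
    refine Lagrange.eq_interpolate hv (degree_le_natDegree.trans_lt ?_)
    rw [Finset.card_range]
    exact_mod_cast Nat.lt_succ_of_le (hdeg a)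
  refine ⟨Lagrange.interpolate nodes v fun i => ∫ a, (p a).eval (v i) ∂μ, fun t => ?_⟩
  calc
    _ = ∑ i ∈ nodes, (∫ a, (p a).eval (v i) ∂μ) * (Lagrange.basis nodes v i).eval t := by
      simp [Lagrange.interpolate_apply, eval_finsetSum]
    _ = ∫ a, ∑ i ∈ nodes, (p a).eval (v i) * (Lagrange.basis nodes v i).eval t ∂μ := by
      simp_rw [integral_finsetSum nodes fun i _ => (hint (v i)).mul_const _, integral_mul_const]
    _ = ∫ a, (p a).eval t ∂μ := by
      congr with a
      conv_rhs => rw [hp a]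
      simp [Lagrange.interpolate_apply, eval_finsetSum]

end IntegralOfPolynomials

theorem integrableOn_ball_of_continuous {X G : Type*} [MetricSpace X] [ProperSpace X]
    [MeasurableSpace X] [OpensMeasurableSpace X] {μ : Measure X} [IsFiniteMeasureOnCompacts μ]
    [NormedAddCommGroup G] {f : X → G} (hf : Continuous f) (x : X) (ρ : ℝ) :
    IntegrableOn f (ball x ρ) μ :=
  (hf.continuousOn.integrableOn_compact (isCompact_closedBall x ρ)).mono_set ball_subset_closedBall

theorem eval_charpoly_neg_eq_pow_mul_det {K V : Type*} [Field K] [AddCommGroup V] [Module K V]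
    [FiniteDimensional K V] (A : V →ₗ[K] V) {s : K} (hs : s ≠ 0) :
    (-A).charpoly.eval s = s ^ finrank K V * LinearMap.det (1 + s⁻¹ • A) := by
  rw [LinearMap.eval_charpoly, sub_neg_eq_add, ← LinearMap.det_smul, smul_add,
    smul_inv_smul₀ hs, Algebra.algebraMap_eq_smul_one]

section

variable {X Y : Type*} [TopologicalSpace X] [TopologicalSpace Y] [T2Space Y]

theorem image_eq_of_isOpen_image {f : X → Y} {U K : Set X} {V : Set Y} (hV : IsPreconnected V)
    (hU : U.Nonempty) (hUK : U ⊆ K) (hK : IsCompact K) (hf : ContinuousOn f K)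
    (hopen : IsOpen (f '' U)) (hUV : MapsTo f U V) (hKV : MapsTo f (K \ U) Vᶜ) :
    f '' U = V := by
  refine hUV.image_subset.antisymm (hV.subset_of_closure_inter_subset hopen ?_ ?_)
  · exact (hU.image f).mono (subset_inter hUV.image_subset Subset.rfl)
  · rintro y ⟨hy, hyV⟩
    obtain ⟨x, hxK, rfl⟩ :=
      closure_minimal (image_mono hUK) (hK.image_of_continuousOn hf).isClosed hy
    exact mem_image_of_mem f (by_contra fun hxU => hKV ⟨hxK, hxU⟩ hyV)

end

section

variable {E : Type*} [NormedAddCommGroup E] [NormedSpace ℝ E] {g : E → E} {s : Set E} {c : ℝ≥0}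

theorem approximatesLinearOn_id_add (hg : LipschitzOnWith c g s) :
    ApproximatesLinearOn (fun x => x + g x) (ContinuousLinearEquiv.refl ℝ E : E →L[ℝ] E) s c := by
  refine LipschitzOnWith.approximatesLinearOn ?_
  convert hg using 1
  ext x
  simp

theorem subsingleton_or_lt_inv_nnnorm_refl_symm (hc : c < 1) :
    Subsingleton E ∨ c < ‖((ContinuousLinearEquiv.refl ℝ E).symm : E →L[ℝ] E)‖₊⁻¹ := by
  rcases subsingleton_or_nontrivial E with _ | _
  · exact .inl inferInstance
  · exact .inr (by simpa using hc)

theorem injOn_id_add_of_lipschitzOnWith (hg : LipschitzOnWith c g s) (hc : c < 1) :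
    InjOn (fun x => x + g x) s :=
  (approximatesLinearOn_id_add hg).injOn (subsingleton_or_lt_inv_nnnorm_refl_symm hc)

theorem isOpen_image_id_add_of_lipschitzOnWith [CompleteSpace E] (hg : LipschitzOnWith c g s)
    (hc : c < 1) (hs : IsOpen s) : IsOpen ((fun x => x + g x) '' s) :=
  ((approximatesLinearOn_id_add hg).toOpenPartialHomeomorph _ _
    (subsingleton_or_lt_inv_nnnorm_refl_symm hc) hs).open_target

end

section

variable {E : Type*} [NormedAddCommGroup E] [NormedSpace ℝ E]

theorem eventually_forall_det_one_add_smul_pos {X : Type*} [TopologicalSpace X] {K : Set X}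
    (hK : IsCompact K) {A : X → E →L[ℝ] E} (hA : Continuous A) :
    ∀ᶠ t : ℝ in 𝓝 0, ∀ x ∈ K, 0 < (1 + t • A x).det := by
  refine hK.eventually_forall_of_forall_eventually fun x _ => ?_
  have hcont : Continuous fun z : ℝ × X => (1 + z.1 • A z.2).det :=
    ContinuousLinearMap.continuous_det.comp (by fun_prop)
  exact hcont.continuousAt.eventually (lt_mem_nhds (by simp [ContinuousLinearMap.det]))

variable [FiniteDimensional ℝ E] {r : E → E}

theorem image_ball_id_add_smul_sub_eq {t : ℝ} {K : ℝ≥0} (hr : Continuous r)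
    (hmaps : MapsTo r (ball 0 1) (closedBall 0 1)) (hfix : EqOn r id (sphere 0 1))
    (ht : t ∈ Ico 0 1) (hK : LipschitzOnWith K (fun x => t • (r x - x)) (ball 0 1)) (hK1 : K < 1) :
    (fun x => x + t • (r x - x)) '' ball 0 1 = ball 0 1 := by
  have : ProperSpace E := FiniteDimensional.proper_real E
  refine image_eq_of_isOpen_image (convex_ball 0 1).isPreconnected (nonempty_ball.2 one_pos)
    ball_subset_closedBall (isCompact_closedBall 0 1) (by fun_prop)
    (isOpen_image_id_add_of_lipschitzOnWith hK hK1 isOpen_ball) ?_ ?_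
  · intro x hx
    have hrx := mem_closedBall_zero_iff.1 (hmaps hx)
    rw [mem_ball_zero_iff] at hx ⊢
    calc
      ‖x + t • (r x - x)‖ = ‖(1 - t) • x + t • r x‖ := by congr 1; module
      _ ≤ (1 - t) * ‖x‖ + t * ‖r x‖ := by
        refine (norm_add_le _ _).trans_eq ?_
        rw [norm_smul, norm_smul, Real.norm_of_nonneg ht.1,
          Real.norm_of_nonneg (sub_nonneg.2 ht.2.le)]
      _ < 1 := by nlinarith [ht.1, ht.2]
  · intro x hx
    rw [closedBall_sdiff_ball] at hx
    simp [hfix hx, mem_sphere_zero_iff_norm.1 hx]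

variable [MeasurableSpace E] [BorelSpace E] (μ : Measure E) [μ.IsAddHaarMeasure]

theorem eventually_integral_det_one_add_smul_fderiv_sub (hr : ContDiff ℝ 1 r)
    (hmaps : MapsTo r (ball 0 1) (closedBall 0 1)) (hfix : EqOn r id (sphere 0 1)) :
    ∀ᶠ t : ℝ in 𝓝[>] 0,
      ∫ x in ball 0 1, (1 + t • (fderiv ℝ r x - 1)).det ∂μ = μ.real (ball 0 1) := by
  have : ProperSpace E := FiniteDimensional.proper_real E
  obtain ⟨K, hK⟩ : ∃ K, LipschitzOnWith K (fun x => r x - x) (closedBall 0 1) :=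
    (hr.sub contDiff_id).contDiffOn.exists_lipschitzOnWith one_ne_zero (convex_closedBall 0 1)
      (isCompact_closedBall 0 1)
  have hdet : ∀ᶠ t : ℝ in 𝓝 0, ∀ x ∈ closedBall (0 : E) 1,
      0 < (1 + t • (fderiv ℝ r x - 1)).det :=
    eventually_forall_det_one_add_smul_pos (isCompact_closedBall 0 1)
      ((hr.continuous_fderiv one_ne_zero).sub continuous_const)
  have hlt : ∀ᶠ t : ℝ in 𝓝 0, ‖t‖₊ * K < 1 :=
    (by fun_prop : Continuous fun t : ℝ => ‖t‖₊ * K).continuousAt.eventually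
      (gt_mem_nhds (by simp))
  filter_upwards [nhdsWithin_le_nhds hdet, nhdsWithin_le_nhds hlt,
    Ioo_mem_nhdsGT (zero_lt_one' ℝ)] with t hdet hlt ht
  have hlip : LipschitzOnWith (‖t‖₊ * K) (fun x => t • (r x - x)) (ball 0 1) :=
    ((lipschitzWith_smul t).comp_lipschitzOnWith hK).mono ball_subset_closedBall
  have hderiv (x : E) (_ : x ∈ ball (0 : E) 1) :
      HasFDerivWithinAt (fun x => x + t • (r x - x)) (1 + t • (fderiv ℝ r x - 1)) (ball 0 1) x :=
    ((hasFDerivAt_id x).add ((((hr.differentiable one_ne_zero) x).hasFDerivAt.sub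
      (hasFDerivAt_id x)).const_smul t)).hasFDerivWithinAt
  calc
    ∫ x in ball 0 1, (1 + t • (fderiv ℝ r x - 1)).det ∂μ
      = ∫ x in ball 0 1, |(1 + t • (fderiv ℝ r x - 1)).det| • (1 : ℝ) ∂μ :=
      setIntegral_congr_fun measurableSet_ball fun x hx => by
        simp [abs_of_pos (hdet x (ball_subset_closedBall hx))]
    _ = ∫ _ in (fun x => x + t • (r x - x)) '' ball 0 1, (1 : ℝ) ∂μ :=
      (integral_image_eq_integral_abs_det_fderiv_smul μ measurableSet_ball hderiv
        (injOn_id_add_of_lipschitzOnWith hlip hlt) fun _ => 1).symm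
    _ = μ.real (ball 0 1) := by
      rw [image_ball_id_add_smul_sub_eq hr.continuous hmaps hfix ⟨ht.1.le, ht.2⟩ hlip hlt]
      simp

theorem integral_det_fderiv_eq_measureReal_ball (hr : ContDiff ℝ 1 r)
    (hmaps : MapsTo r (ball 0 1) (closedBall 0 1)) (hfix : EqOn r id (sphere 0 1)) :
    ∫ x in ball 0 1, (fderiv ℝ r x).det ∂μ = μ.real (ball 0 1) := by
  have : ProperSpace E := FiniteDimensional.proper_real E
  let A (x : E) : E →L[ℝ] E := fderiv ℝ r x - 1
  have hA : Continuous A := (hr.continuous_fderiv one_ne_zero).sub continuous_const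
  let p (x : E) : ℝ[X] := (-(A x : E →ₗ[ℝ] E)).charpoly
  have hp (x : E) (s : ℝ) : (p x).eval s = (s • 1 + A x).det := by
    simp [p, ContinuousLinearMap.det, LinearMap.eval_charpoly, Algebra.algebraMap_eq_smul_one]
  obtain ⟨q, hq⟩ : ∃ q : ℝ[X], ∀ s, q.eval s = ∫ x in ball 0 1, (p x).eval s ∂μ := by
    refine exists_polynomial_eval_eq_integral (fun x => (LinearMap.charpoly_natDegree _).le)
      fun s => integrableOn_ball_of_continuous ?_ 0 1
    simp only [hp]
    exact ContinuousLinearMap.continuous_det.comp (by fun_prop)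
  have hlarge : ∀ᶠ s in atTop, q.eval s = (C (μ.real (ball 0 1)) * X ^ finrank ℝ E).eval s := by
    filter_upwards [eventually_gt_atTop 0, tendsto_inv_atTop_nhdsGT_zero.eventually
      (eventually_integral_det_one_add_smul_fderiv_sub μ hr hmaps hfix)] with s hs hint
    have hps (x : E) : (p x).eval s = s ^ finrank ℝ E * (1 + s⁻¹ • A x).det :=
      eval_charpoly_neg_eq_pow_mul_det _ hs.ne'
    simp_rw [hq, hps]
    rw [integral_const_mul, hint, eval_mul, eval_C, eval_pow, eval_X, mul_comm]
  obtain ⟨b, hb⟩ := eventually_atTop.1 hlarge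
  have hq_eq := eq_of_infinite_eval_eq _ _ ((Ici_infinite b).mono hb)
  simpa [hp, A, hq_eq] using (hq 1).symm

end

universe u v

theorem exists_continuousMap_eqOn {X : Type u} {Y : Type v} [TopologicalSpace X] [NormalSpace X]
    [TopologicalSpace Y] [TietzeExtension.{u} Y] {f : X → Y} {s : Set X} (hs : IsClosed s)
    (hf : ContinuousOn f s) : ∃ g : C(X, Y), EqOn g f s := by
  obtain ⟨g, hg⟩ :=
    ContinuousMap.exists_restrict_eq hs ⟨_, continuousOn_iff_continuous_domRestrict.1 hf⟩
  exact ⟨g, fun x hx => DFunLike.congr_fun hg ⟨x, hx⟩⟩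

theorem exists_continuousMap_leftInvOn {X : Type u} {Y : Type v} [TopologicalSpace X]
    [TietzeExtension.{v} X] [TopologicalSpace Y] [T2Space Y] [NormalSpace Y] {f : X → Y}
    {K : Set X} (hK : IsCompact K) (hf : ContinuousOn f K) (hinj : InjOn f K) :
    ∃ g : C(Y, X), LeftInvOn g f K := by
  have : CompactSpace K := isCompact_iff_compactSpace.1 hK
  have hemb : IsClosedEmbedding (K.domRestrict f) :=
    (continuousOn_iff_continuous_domRestrict.1 hf).isClosedEmbedding (injOn_iff_injective.1 hinj)
  obtain ⟨g, hg⟩ := ContinuousMap.exists_extension hemb ⟨Subtype.val, continuous_subtype_val⟩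
  exact ⟨g, fun x hx => DFunLike.congr_fun hg ⟨x, hx⟩⟩

theorem exists_mem_sphere_ne_of_contDiff {E : Type*} [NormedAddCommGroup E] [NormedSpace ℝ E]
    [FiniteDimensional ℝ E] {r : E → E} (hr : ContDiff ℝ 1 r)
    (hmaps : MapsTo r (closedBall 0 1) (sphere 0 1)) : ∃ x ∈ sphere (0 : E) 1, r x ≠ x := by
  by_contra! hfix
  have : CompleteSpace E := FiniteDimensional.complete ℝ E
  let : MeasurableSpace E := borel E
  have : BorelSpace E := ⟨rfl⟩
  let μ : Measure E := Measure.addHaar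
  have hsingular (x : E) (hx : x ∈ ball 0 1) : (fderiv ℝ r x).det = 0 := by
    by_contra hdet
    have hsurj : (fderiv ℝ r x).range = ⊤ :=
      LinearMap.range_eq_top.2 (LinearMap.equivOfDetNeZero _ hdet).surjective
    have hnhds : sphere (0 : E) 1 ∈ 𝓝 (r x) := by
      rw [← (hr.contDiffAt.hasStrictFDerivAt one_ne_zero).map_nhds_eq_of_surj hsurj]
      exact mem_map.2 (mem_of_superset (isOpen_ball.mem_nhds hx) fun y hy =>
        hmaps (ball_subset_closedBall hy))
    have hint : r x ∈ interior (sphere (0 : E) 1) := mem_interior_iff_mem_nhds.2 hnhds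
    rwa [interior_sphere _ one_ne_zero] at hint
  have hvol : μ.real (ball 0 1) = 0 := by
    rw [← integral_det_fderiv_eq_measureReal_ball μ hr
      (fun x hx => sphere_subset_closedBall (hmaps (ball_subset_closedBall hx))) hfix]
    exact setIntegral_eq_zero_of_forall_eq_zero hsingular
  exact (ENNReal.toReal_pos (measure_ball_pos μ 0 one_pos).ne' measure_ball_lt_top.ne).ne' hvol

section

variable {E : Type u} [NormedAddCommGroup E] [InnerProductSpace ℝ E] [FiniteDimensional ℝ E]

theorem exists_isFixedPt_of_contDiff {f : E → E} {s : ℝ} (hf : ContDiff ℝ 1 f) (hs : s < 1)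
    (hmaps : MapsTo f (closedBall 0 1) (closedBall 0 s)) :
    ∃ x ∈ closedBall (0 : E) 1, IsFixedPt f x := by
  by_contra! hfix
  have hs0 : 0 ≤ s := nonempty_closedBall.1 ⟨f 0, hmaps (by simp)⟩
  -- `x - χ x • f x` vanishes nowhere and is the identity on the unit sphere, so normalizing it
  -- would give a `C¹` retraction onto the sphere.
  let χ : ContDiffBump (0 : E) := ⟨(s + 1) / 2, 1, by linarith, by linarith⟩
  let k (x : E) : E := x - χ x • f x
  have hk : ContDiff ℝ 1 k := contDiff_id.sub (χ.contDiff.smul hf)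
  have hk_sphere (x : E) (hx : 1 ≤ ‖x‖) : k x = x := by
    have hχ : χ x = 0 := χ.zero_of_le_dist (by simpa [χ] using hx)
    simp [k, hχ]
  have hk_ne (x : E) : k x ≠ 0 := by
    intro hkx
    rcases le_or_gt 1 ‖x‖ with hx | hx
    · rw [hk_sphere x hx] at hkx
      simp [hkx] at hx
      linarith
    have hx_mem : x ∈ closedBall (0 : E) 1 := mem_closedBall_zero_iff.2 hx.le
    have hx_eq : x = χ x • f x := sub_eq_zero.1 hkx
    have hx_le : ‖x‖ ≤ s := by
      calc
        ‖x‖ = χ x * ‖f x‖ := by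
          conv_lhs => rw [hx_eq, norm_smul, Real.norm_of_nonneg χ.nonneg]
        _ ≤ ‖f x‖ := mul_le_of_le_one_left (norm_nonneg _) χ.le_one
        _ ≤ s := mem_closedBall_zero_iff.1 (hmaps hx_mem)
    have hχ : χ x = 1 := χ.one_of_mem_closedBall (by simp [χ]; linarith)
    exact hfix x hx_mem (by simpa [hχ, IsFixedPt] using hx_eq.symm)
  obtain ⟨x, hx, hne⟩ := exists_mem_sphere_ne_of_contDiff (r := fun x => ‖k x‖⁻¹ • k x)
    (((hk.norm ℝ hk_ne).inv fun x => norm_ne_zero_iff.2 (hk_ne x)).smul hk)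
    fun x _ => by simp [norm_smul, hk_ne x]
  rw [mem_sphere_zero_iff_norm] at hx
  exact hne (by simp [hk_sphere x hx.ge, hx])

theorem exists_isFixedPt_of_continuousOn_closedBall {f : E → E}
    (hf : ContinuousOn f (closedBall 0 1)) (hmaps : MapsTo f (closedBall 0 1) (closedBall 0 1)) :
    ∃ x ∈ closedBall (0 : E) 1, IsFixedPt f x := by
  by_contra! hfix
  have : ProperSpace E := FiniteDimensional.proper_real E
  have : TietzeExtension.{u} E := TietzeExtension.of_tvs ℝ
  obtain ⟨g, hg⟩ := exists_continuousMap_eqOn isClosed_closedBall hf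
  obtain ⟨δ, hδ, hδf⟩ := (isCompact_closedBall (0 : E) 1).exists_forall_le'
    (hf.sub continuousOn_id).norm fun x hx => norm_pos_iff.2 (sub_ne_zero.2 (hfix x hx))
  let η := min (δ / 4) (1 / 2)
  have hη : 0 < η := by positivity
  have hηδ : η ≤ δ / 4 := min_le_left _ _
  have hη1 : η ≤ 1 / 2 := min_le_right _ _
  obtain ⟨p, hp, hpg, -⟩ := (g.continuous.const_smul (1 - 2 * η)).exists_contDiff_approx 1
    (ε := fun _ => η) continuous_const fun _ => hη
  have hpf (x) (hx : x ∈ closedBall (0 : E) 1) : ‖p x - (1 - 2 * η) • f x‖ < η := by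
    simpa [dist_eq_norm, hg hx] using hpg x
  have hf_le (x) (hx : x ∈ closedBall (0 : E) 1) : ‖f x‖ ≤ 1 :=
    mem_closedBall_zero_iff.1 (hmaps hx)
  obtain ⟨x, hx, hpx⟩ : ∃ x ∈ closedBall (0 : E) 1, IsFixedPt p x := by
    refine exists_isFixedPt_of_contDiff hp (sub_lt_self 1 hη) fun x hx => ?_
    rw [mem_closedBall_zero_iff]
    calc
      ‖p x‖ ≤ ‖p x - (1 - 2 * η) • f x‖ + ‖(1 - 2 * η) • f x‖ := by
        simpa using norm_add_le (p x - (1 - 2 * η) • f x) ((1 - 2 * η) • f x)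
      _ ≤ η + (1 - 2 * η) * 1 := by
        rw [norm_smul, Real.norm_of_nonneg (by linarith)]
        gcongr
        exacts [(hpf x hx).le, by linarith, hf_le x hx]
      _ = 1 - η := by ring
  refine (hδf x hx).not_gt ?_
  calc
    ‖f x - x‖ = ‖(2 * η) • f x - (p x - (1 - 2 * η) • f x)‖ := by
      rw [hpx.eq]; congr 1; module
    _ ≤ 2 * η * ‖f x‖ + ‖p x - (1 - 2 * η) • f x‖ := by
      refine (norm_sub_le _ _).trans_eq ?_
      rw [norm_smul, Real.norm_of_nonneg (by linarith)]
    _ < δ := by nlinarith [hf_le x hx, hpf x hx]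

theorem exists_eq_zero_of_norm_sub_self_le {h : E → E} (hh : ContinuousOn h (closedBall 0 1))
    (hdist : ∀ x ∈ closedBall (0 : E) 1, ‖h x - x‖ ≤ 1) : ∃ x ∈ closedBall (0 : E) 1, h x = 0 := by
  obtain ⟨x, hx, hfix⟩ := exists_isFixedPt_of_continuousOn_closedBall (f := fun x => x - h x)
    (continuousOn_id.sub hh) fun x hx => by
      rw [mem_closedBall_zero_iff, norm_sub_rev]
      exact hdist x hx
  exact ⟨x, hx, sub_eq_self.1 hfix⟩

end

theorem exists_continuous_ne_zero_of_measure_eq_zero {E : Type*} [NormedAddCommGroup E]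
    [NormedSpace ℝ E] [FiniteDimensional ℝ E] [MeasurableSpace E] [BorelSpace E] (μ : Measure E)
    [μ.IsAddHaarMeasure] {f : E → E} (hf : Continuous f) {K N : Set E} (hK : IsCompact K)
    (hKf : ∀ x ∈ K, f x ≠ 0) (hN : μ N = 0) {ε : ℝ} (hε : 0 < ε) :
    ∃ p : E → E, Continuous p ∧ (∀ x, ‖p x - f x‖ < ε) ∧ ∀ x ∈ K ∪ N, p x ≠ 0 := by
  obtain ⟨δ, hδ, hδf⟩ :=
    hK.exists_forall_le' hf.norm.continuousOn fun x hx => norm_pos_iff.2 (hKf x hx)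
  have hη : 0 < min ε δ / 2 := by positivity
  obtain ⟨q, hq, hqf, -⟩ := hf.exists_contDiff_approx 1 (ε := fun _ => min ε δ / 2)
    continuous_const fun _ => hη
  have hqN : μ (q '' N) = 0 := addHaar_image_eq_zero_of_differentiableOn_of_addHaar_eq_zero μ
    (hq.differentiable one_ne_zero).differentiableOn hN
  obtain ⟨a, ha, haN⟩ : ∃ a ∈ ball (0 : E) (min ε δ / 2), a ∉ q '' N :=
    not_subset.1 fun hsub => (measure_ball_pos μ 0 hη).ne' (measure_mono_null hsub hqN)
  have hclose (x : E) : ‖q x - a - f x‖ < min ε δ := by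
    calc
      ‖q x - a - f x‖ = ‖(q x - f x) - a‖ := by congr 1; abel
      _ ≤ ‖q x - f x‖ + ‖a‖ := norm_sub_le _ _
      _ < min ε δ / 2 + min ε δ / 2 :=
        add_lt_add (by simpa [dist_eq_norm] using hqf x) (mem_ball_zero_iff.1 ha)
      _ = min ε δ := add_halves _
  refine ⟨fun x => q x - a, hq.continuous.sub continuous_const,
    fun x => (hclose x).trans_le (min_le_left _ _), ?_⟩
  rintro x (hx | hx) (hzero : q x - a = 0)
  · have hlt := (hclose x).trans_le (min_le_right _ _)
    rw [hzero, zero_sub, norm_neg] at hlt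
    exact (hδf x hx).not_gt hlt
  · exact haN ⟨x, hx, sub_eq_zero.1 hzero⟩

section

variable {E : Type*} [NormedAddCommGroup E] [NormedSpace ℝ E] {c x : E} {ε : ℝ}

/-- The map that pushes the points of `closedBall c ε` other than `c` radially out to the sphere
`sphere c ε` and fixes every point outside that ball. -/
noncomputable def pushOut (c : E) (ε : ℝ) (x : E) : E :=
  c + max (ε / ‖x - c‖) 1 • (x - c)

theorem pushOut_of_le_norm (hε : 0 < ε) (hx : ε ≤ ‖x - c‖) : pushOut c ε x = x := by
  have hle : ε / ‖x - c‖ ≤ 1 := (div_le_one (hε.trans_le hx)).2 hx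
  simp [pushOut, max_eq_right hle]

theorem pushOut_mem_sphere (hxc : x ≠ c) (hx : ‖x - c‖ ≤ ε) : pushOut c ε x ∈ sphere c ε := by
  have hpos : 0 < ‖x - c‖ := norm_pos_iff.2 (sub_ne_zero.2 hxc)
  have hle : 1 ≤ ε / ‖x - c‖ := (one_le_div hpos).2 hx
  rw [mem_sphere_iff_norm, pushOut, max_eq_left hle, add_sub_cancel_left, norm_smul,
    Real.norm_of_nonneg (zero_le_one.trans hle), div_mul_cancel₀ _ hpos.ne']

theorem continuousOn_pushOut (c : E) (ε : ℝ) : ContinuousOn (pushOut c ε) {c}ᶜ := by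
  have hdiv : ContinuousOn (fun x => ε / ‖x - c‖) {c}ᶜ :=
    continuousOn_const.div (by fun_prop) fun x hx => norm_ne_zero_iff.2 (sub_ne_zero.2 hx)
  exact continuousOn_const.add ((hdiv.sup continuousOn_const).smul (by fun_prop))

theorem dist_apply_pushOut_lt {Y : Type*} [PseudoMetricSpace Y] {g : E → Y} {z : Y} {δ : ℝ}
    (hε : 0 < ε) (hg : MapsTo g (closedBall c ε) (ball z δ)) (hxc : x ≠ c) :
    dist (g (pushOut c ε x)) (g x) < 2 * δ := by
  rcases le_total ε ‖x - c‖ with hfar | hnear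
  · have hδ : 0 < δ := nonempty_ball.1 ⟨_, hg (mem_closedBall_self hε.le)⟩
    simpa [pushOut_of_le_norm hε hfar] using hδ
  · have hpush := hg (sphere_subset_closedBall (pushOut_mem_sphere hxc hnear))
    have hx := hg (mem_closedBall_iff_norm.2 hnear)
    rw [two_mul]
    exact (dist_triangle_right _ _ z).trans_lt (add_lt_add hpush hx)

end

section

variable {E : Type u} [NormedAddCommGroup E] [InnerProductSpace ℝ E] [FiniteDimensional ℝ E]
  {f : E → E}

theorem mem_image_closedBall_of_leftInvOn {g : E → E} (hf : ContinuousOn f (closedBall 0 1))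
    (hg : Continuous g) (hinv : LeftInvOn g f (closedBall 0 1)) {c : E} {ε : ℝ}
    (hc : f 0 ∈ ball c ε) (hε : MapsTo g (closedBall c ε) (ball 0 (1 / 4))) :
    c ∈ f '' closedBall 0 1 := by
  by_contra hcf
  have : ProperSpace E := FiniteDimensional.proper_real E
  let _ : MeasurableSpace E := borel E
  have : BorelSpace E := ⟨rfl⟩
  have hε0 : 0 < ε := nonempty_ball.1 ⟨_, hc⟩
  let K : Set E := f '' closedBall 0 1 ∩ {y | ε ≤ ‖y - c‖}
  have hK : IsCompact K := ((isCompact_closedBall 0 1).image_of_continuousOn hf).inter_right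
    (isClosed_le continuous_const (by fun_prop))
  have hgK : ∀ y ∈ K, g y ≠ 0 := by
    rintro _ ⟨⟨x, hx, rfl⟩, hfar⟩ hzero
    rw [hinv hx] at hzero
    rw [hzero] at hfar
    exact (mem_ball_iff_norm.1 hc).not_ge hfar
  obtain ⟨p, hp, hpg, hp_ne⟩ := exists_continuous_ne_zero_of_measure_eq_zero Measure.addHaar hg hK
    hgK (Measure.addHaar_sphere_of_ne_zero Measure.addHaar c hε0.ne') (ε := 1 / 4) (by norm_num)
  have hne (x) (hx : x ∈ closedBall (0 : E) 1) : f x ≠ c := fun h => hcf ⟨x, hx, h⟩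
  have hcont : ContinuousOn (fun x => p (pushOut c ε (f x))) (closedBall 0 1) :=
    hp.comp_continuousOn ((continuousOn_pushOut c ε).comp hf hne)
  obtain ⟨x, hx, hzero⟩ := exists_eq_zero_of_norm_sub_self_le hcont fun x hx => by
    have hpush : ‖g (pushOut c ε (f x)) - x‖ < 2 * (1 / 4) := by
      simpa only [dist_eq_norm, hinv hx] using dist_apply_pushOut_lt hε0 hε (hne x hx)
    calc
      ‖p (pushOut c ε (f x)) - x‖
        ≤ ‖p (pushOut c ε (f x)) - g (pushOut c ε (f x))‖ + ‖g (pushOut c ε (f x)) - x‖ :=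
        norm_sub_le_norm_sub_add_norm_sub _ _ _
      _ ≤ 1 / 4 + 2 * (1 / 4) := add_le_add (hpg _).le hpush.le
      _ ≤ 1 := by norm_num
  refine hp_ne _ ?_ hzero
  rcases le_total ε ‖f x - c‖ with hfar | hnear
  · rw [pushOut_of_le_norm hε0 hfar]
    exact .inl ⟨mem_image_of_mem f hx, hfar⟩
  · exact .inr (pushOut_mem_sphere (hne x hx) hnear)

theorem image_closedBall_zero_one_mem_nhds (hf : ContinuousOn f (closedBall 0 1))
    (hinj : InjOn f (closedBall 0 1)) : f '' closedBall 0 1 ∈ 𝓝 (f 0) := by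
  have : ProperSpace E := FiniteDimensional.proper_real E
  have : TietzeExtension.{u} E := TietzeExtension.of_tvs ℝ
  obtain ⟨g, hg⟩ := exists_continuousMap_leftInvOn (isCompact_closedBall 0 1) hf hinj
  have hg0 : g (f 0) = 0 := hg (mem_closedBall_self zero_le_one)
  obtain ⟨ε, hε, hball⟩ := Metric.mem_nhds_iff.1 (g.continuous.continuousAt.preimage_mem_nhds
    (hg0 ▸ ball_mem_nhds (0 : E) (by norm_num : (0 : ℝ) < 1 / 4)))
  refine mem_of_superset (ball_mem_nhds (f 0) (half_pos hε)) fun c hc => ?_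
  refine mem_image_closedBall_of_leftInvOn hf g.continuous hg (mem_ball_comm.1 hc) fun y hy => ?_
  rw [← hg0]
  exact hball (closedBall_subset_ball' (by linarith [mem_ball.1 hc]) hy)

theorem image_mem_nhds_of_continuousOn_injOn {U : Set E} {x : E} (hU : U ∈ 𝓝 x)
    (hf : ContinuousOn f U) (hinj : InjOn f U) : f '' U ∈ 𝓝 (f x) := by
  obtain ⟨ε, hε, hsub⟩ := nhds_basis_closedBall.mem_iff.1 hU
  let φ (y : E) : E := x + ε • y
  have hφ : MapsTo φ (closedBall 0 1) U := fun y hy => hsub <| by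
    rw [mem_closedBall_zero_iff] at hy
    simpa [φ, norm_smul, abs_of_pos hε] using mul_le_of_le_one_right hε.le hy
  have hφ_inj : Injective φ := (add_right_injective x).comp (smul_right_injective E hε.ne')
  have hnhds := image_closedBall_zero_one_mem_nhds (hf.comp (by fun_prop) hφ)
    (hinj.comp hφ_inj.injOn hφ)
  rw [image_comp] at hnhds
  simpa [φ] using mem_of_superset hnhds (image_mono hφ.image_subset)

end

section

variable {E F : Type*} [AddCommGroup E] [Module ℝ E] [TopologicalSpace E] [IsTopologicalAddGroup E]
  [ContinuousSMul ℝ E] [T2Space E] [FiniteDimensional ℝ E]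
  [AddCommGroup F] [Module ℝ F] [TopologicalSpace F] [IsTopologicalAddGroup F]
  [ContinuousSMul ℝ F] [T2Space F] [FiniteDimensional ℝ F] {f : E → F}

theorem isOpen_image_of_continuousOn_injOn (hEF : finrank ℝ E = finrank ℝ F) {U : Set E}
    (hU : IsOpen U) (hf : ContinuousOn f U) (hinj : InjOn f U) : IsOpen (f '' U) := by
  let e : EuclideanSpace ℝ (Fin (finrank ℝ E)) ≃L[ℝ] E := toEuclidean.symm
  let e' : F ≃L[ℝ] EuclideanSpace ℝ (Fin (finrank ℝ E)) := .ofFinrankEq (by simp [hEF])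
  have hopen : IsOpen ((e' ∘ f ∘ e) '' (e ⁻¹' U)) := by
    refine isOpen_iff_mem_nhds.2 (forall_mem_image.2 fun x hx => ?_)
    exact image_mem_nhds_of_continuousOn_injOn ((hU.preimage e.continuous).mem_nhds hx)
      (e'.continuous.comp_continuousOn (hf.comp e.continuous.continuousOn (mapsTo_preimage e U)))
      (e'.injective.comp_injOn (hinj.comp e.injective.injOn (mapsTo_preimage e U)))
  rw [image_comp, image_comp, image_preimage_eq U e.surjective] at hopen
  exact e'.toHomeomorph.isOpen_image.1 hopen

theorem isHomeomorph_of_continuous_bijective (hEF : finrank ℝ E = finrank ℝ F)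
    (hf : Continuous f) (hbij : Bijective f) : IsHomeomorph f where
  continuous := hf
  isOpenMap _ hU := isOpen_image_of_continuousOn_injOn hEF hU hf.continuousOn hbij.injective.injOn
  bijective := hbij

theorem surjective_of_isClosedEmbedding (hEF : finrank ℝ E = finrank ℝ F)
    (hf : IsClosedEmbedding f) : Surjective f := by
  have hopen : IsOpen (range f) := by
    simpa using isOpen_image_of_continuousOn_injOn hEF isOpen_univ hf.continuous.continuousOn
      hf.injective.injOn
  exact range_eq_univ.1 (IsClopen.eq_univ ⟨hf.isClosed_range, hopen⟩ (range_nonempty f))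

theorem range_eq_of_range_subset_of_isClosedEmbedding {X : Type*} [TopologicalSpace X]
    (hEF : finrank ℝ E = finrank ℝ F) {i : E → X} {j : F → X} (hi : IsClosedEmbedding i)
    (hj : IsEmbedding j) (hij : range i ⊆ range j) : range i = range j := by
  choose g hg using fun x => hij (mem_range_self x)
  have hgi : j ∘ g = i := funext hg
  have hg_closed : IsClosedEmbedding g := .of_comp hj (hgi ▸ hi)
  rw [← hgi, range_comp, (surjective_of_isClosedEmbedding hEF hg_closed).range_eq, image_univ]

end

theorem isClosedEmbedding_add_direction {E : Type*} [AddCommGroup E] [Module ℝ E]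
    [TopologicalSpace E] [IsTopologicalAddGroup E] [ContinuousSMul ℝ E] [T2Space E]
    (a : E) (V : Submodule ℝ E) [FiniteDimensional ℝ V] :
    IsClosedEmbedding fun v : V => a + v :=
  (Homeomorph.addLeft a).isClosedEmbedding.comp
    V.closed_of_finiteDimensional.isClosedEmbedding_subtypeVal

theorem range_add_direction {E : Type*} [AddCommGroup E] [Module ℝ E]
    {S : AffineSubspace ℝ E} {a : E} (ha : a ∈ S) :
    (range fun v : S.direction => a + (v : E)) = S := by
  ext x
  constructor
  · rintro ⟨v, rfl⟩
    simpa [add_comm] using AffineSubspace.vadd_mem_of_mem_direction v.2 ha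
  · intro hx
    exact ⟨⟨x - a, AffineSubspace.vsub_mem_direction hx ha⟩, by simp⟩

section

variable {E F : Type*} [AddCommGroup E] [Module ℝ E] [TopologicalSpace E] [IsTopologicalAddGroup E]
  [ContinuousSMul ℝ E] [T2Space E] [FiniteDimensional ℝ E]
  [AddCommGroup F] [Module ℝ F] [TopologicalSpace F] [IsTopologicalAddGroup F]
  [ContinuousSMul ℝ F] [T2Space F] [FiniteDimensional ℝ F]

theorem image_line_isLine_of_continuous_bijective_general (hEF : finrank ℝ E = finrank ℝ F)
    {f : E → F} (hf : Continuous f) (hbij : Bijective f) {S : AffineSubspace ℝ E}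
    {T : AffineSubspace ℝ F} (hS : (S : Set E).Nonempty)
    (hdim : finrank ℝ S.direction = finrank ℝ T.direction) (hST : f '' S ⊆ T) :
    f '' S = T := by
  obtain ⟨a, ha⟩ := hS
  have hfa : f a ∈ T := hST (mem_image_of_mem f ha)
  have hi : IsClosedEmbedding (f ∘ fun v : S.direction => a + (v : E)) :=
    (isHomeomorph_of_continuous_bijective hEF hf hbij).isClosedEmbedding.comp
      (isClosedEmbedding_add_direction a S.direction)
  have hj : IsEmbedding fun w : T.direction => f a + (w : F) :=
    (isClosedEmbedding_add_direction (f a) T.direction).isEmbedding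
  rw [← range_add_direction ha, ← range_comp] at hST ⊢
  rw [← range_add_direction hfa] at hST ⊢
  exact range_eq_of_range_subset_of_isClosedEmbedding hdim hi hj hST

end

theorem lineThru_eq_coe_mk'_span_singleton {k : ℕ} (a b : Fin k → ℝ) :
    lineThru a b = (AffineSubspace.mk' a (Submodule.span ℝ {b}) : Set (Fin k → ℝ)) := by
  ext x
  simp [lineThru, AffineSubspace.mem_mk', Submodule.mem_span_singleton, eq_sub_iff_add_eq',
    eq_comm]

/-- **Proposition (continuity upgrades "into" to "onto" for lines).**
Let `F : ℝⁿ → ℝⁿ` be a continuous bijection that maps a certain line `l` into a line.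
Then `F` maps `l` onto a line, i.e. `F '' l` is a line. -/
theorem image_line_isLine_of_continuous_bijective
    {n : ℕ}
    (F : (Fin n → ℝ) → (Fin n → ℝ))
    (hcont : Continuous F) (hbij : Function.Bijective F)
    (l : Set (Fin n → ℝ)) (hl : IsLine l)
    (hinto : ∃ l' : Set (Fin n → ℝ), IsLine l' ∧ F '' l ⊆ l') :
    IsLine (F '' l) := by
  obtain ⟨a, b, hb, rfl⟩ := hl
  obtain ⟨_, ⟨c, d, hd, rfl⟩, hsub⟩ := hinto
  refine ⟨c, d, hd, ?_⟩
  rw [lineThru_eq_coe_mk'_span_singleton, lineThru_eq_coe_mk'_span_singleton] at hsub ⊢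
  refine image_line_isLine_of_continuous_bijective_general rfl hcont hbij
    (AffineSubspace.mk'_nonempty _ _) ?_ hsub
  rw [AffineSubspace.direction_mk', AffineSubspace.direction_mk', finrank_span_singleton hb,
    finrank_span_singleton hd]
end

section
/- Let 2 ≤ n ≤ m and let v₁, ..., vₙ be linearly independent vectors in ℝⁿ. Let F : ℝⁿ → ℝᵐ be an injection with F(0) = 0 which maps each line in ℒ(v₁, ..., vₙ) onto a line, and assume moreover that for each i the family of lines parallel to vᵢ is mapped onto the family of lines parallel to F(vᵢ) (parallel lines are mapped onto parallel lines). Then for every 2 ≤ k ≤ n the following hold: (1) F(v₁), ..., F(v_k) are linearly independent; (2) F(span{v₁, ..., v_k}) = span{F(v₁), ..., F(v_k)}; and (3) F(v_k + span{v₁, ..., v_{k−1}}) = F(v_k) + span{F(v₁), ..., F(v_{k−1})}. -/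
/-!
If every line along a direction of `S` is mapped onto a line along the image direction, then walking
from `a` to `a + y` one direction of `S` at a time, the images move from `F a` along the directions
of `F '' S`, and conversely every such walk from `F a` lifts. Hence `F` carries translates of
`span S` onto translates of `span (F '' S)`. If `F vᵢ` were in the span of the other `F vⱼ`, which
is the image of the span of the other `vⱼ`, then injectivity would put `vᵢ` in the latter span.
-/

open Submodule
open scoped Pointwise

theorem setOf_exists_mem_eq_add {V σ : Type*} [Add V] [SetLike σ V] (a : V) (p : σ) :
    {z | ∃ y ∈ p, z = a + y} = a +ᵥ (p : Set V) := by
  ext z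
  simp only [Set.mem_ofPred_eq, Set.mem_vadd_set, SetLike.mem_coe, vadd_eq_add, eq_comm]

theorem vadd_coe_set_eq_of_mem {V σ : Type*} [AddGroup V] [SetLike σ V] [AddSubgroupClass σ V]
    {p : σ} {a c : V} (ha : a ∈ c +ᵥ (p : Set V)) : a +ᵥ (p : Set V) = c +ᵥ (p : Set V) := by
  obtain ⟨y, hy, rfl⟩ := ha
  change (c + y) +ᵥ (p : Set V) = _
  rw [add_vadd, vadd_coe_set hy]

/-- `F` maps every line parallel to `u` onto a line parallel to `F u`. Lines are written as
translates of `K ∙ u`, so for `u = 0` or `F u = 0` they degenerate to points. -/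
def PreservesLinesAlong (K : Type*) {V W : Type*} [Ring K] [AddCommGroup V] [Module K V]
    [AddCommGroup W] [Module K W] (F : V → W) (u : V) : Prop :=
  ∀ a : V, ∃ c : W, F '' (a +ᵥ (K ∙ u : Set V)) = c +ᵥ (K ∙ F u : Set W)

namespace PreservesLinesAlong

section Ring

variable {K V W : Type*} [Ring K] [AddCommGroup V] [Module K V] [AddCommGroup W] [Module K W]
  {F : V → W} {u : V} {S : Set V}

theorem image_vadd_span_singleton (hF : PreservesLinesAlong K F u) (a : V) :
    F '' (a +ᵥ (K ∙ u : Set V)) = F a +ᵥ (K ∙ F u : Set W) := by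
  obtain ⟨c, hc⟩ := hF a
  have ha : F a ∈ c +ᵥ (K ∙ F u : Set W) :=
    hc ▸ Set.mem_image_of_mem F ⟨0, zero_mem _, add_zero a⟩
  rw [hc, vadd_coe_set_eq_of_mem ha]

theorem exists_apply_add_smul_eq (hF : PreservesLinesAlong K F u) (a : V) (t : K) :
    ∃ r : K, F (a + t • u) = F a + r • F u := by
  have h : F (a + t • u) ∈ F a +ᵥ (K ∙ F u : Set W) :=
    hF.image_vadd_span_singleton a ▸
      Set.mem_image_of_mem F ⟨t • u, smul_mem _ t (mem_span_singleton_self u), rfl⟩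
  obtain ⟨_, hz, hFz⟩ := h
  obtain ⟨r, rfl⟩ := mem_span_singleton.1 hz
  exact ⟨r, hFz.symm⟩

theorem exists_eq_apply_add_smul (hF : PreservesLinesAlong K F u) (a : V) (r : K) :
    ∃ t : K, F a + r • F u = F (a + t • u) := by
  have h : F a + r • F u ∈ F '' (a +ᵥ (K ∙ u : Set V)) :=
    hF.image_vadd_span_singleton a ▸ ⟨r • F u, smul_mem _ r (mem_span_singleton_self _), rfl⟩
  obtain ⟨_, ⟨y, hy, rfl⟩, hFy⟩ := h
  obtain ⟨t, rfl⟩ := mem_span_singleton.1 hy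
  exact ⟨t, hFy.symm⟩

theorem apply_add_sub_mem_span (hF : ∀ u ∈ S, PreservesLinesAlong K F u) {y : V}
    (hy : y ∈ span K S) (a : V) : F (a + y) - F a ∈ span K (F '' S) := by
  induction hy using closure_induction generalizing a with
  | zero => simp
  | add x y _ _ ihx ihy =>
    rw [← add_assoc, ← sub_add_sub_cancel _ (F (a + x))]
    exact add_mem (ihy (a + x)) (ihx a)
  | smul_mem t u hu =>
    obtain ⟨r, hr⟩ := (hF u hu).exists_apply_add_smul_eq a t
    rw [hr, add_sub_cancel_left]
    exact smul_mem _ r (subset_span (Set.mem_image_of_mem F hu))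

theorem exists_mem_span_eq_apply_add (hF : ∀ u ∈ S, PreservesLinesAlong K F u) {z : W}
    (hz : z ∈ span K (F '' S)) (a : V) : ∃ y ∈ span K S, F a + z = F (a + y) := by
  induction hz using closure_induction generalizing a with
  | zero => exact ⟨0, zero_mem _, by simp⟩
  | add z w _ _ ihz ihw =>
    obtain ⟨x, hx, hFx⟩ := ihz a
    obtain ⟨y, hy, hFy⟩ := ihw (a + x)
    exact ⟨x + y, add_mem hx hy, by rw [← add_assoc, hFx, hFy, add_assoc]⟩
  | smul_mem r w hw =>
    obtain ⟨u, hu, rfl⟩ := hw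
    obtain ⟨t, ht⟩ := (hF u hu).exists_eq_apply_add_smul a r
    exact ⟨t • u, smul_mem _ t (subset_span hu), ht⟩

theorem image_vadd_span (hF : ∀ u ∈ S, PreservesLinesAlong K F u) (a : V) :
    F '' (a +ᵥ (span K S : Set V)) = F a +ᵥ (span K (F '' S) : Set W) := by
  apply Set.Subset.antisymm
  · rintro _ ⟨_, ⟨y, hy, rfl⟩, rfl⟩
    exact ⟨_, apply_add_sub_mem_span hF hy a, add_sub_cancel _ _⟩
  · rintro _ ⟨z, hz, rfl⟩
    obtain ⟨y, hy, hFy⟩ := exists_mem_span_eq_apply_add hF hz a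
    exact ⟨a + y, ⟨y, hy, rfl⟩, hFy.symm⟩

theorem image_span (hF0 : F 0 = 0) (hF : ∀ u ∈ S, PreservesLinesAlong K F u) :
    F '' (span K S : Set V) = (span K (F '' S) : Set W) := by
  simpa only [hF0, zero_vadd] using image_vadd_span hF 0

end Ring

section DivisionRing

variable {K V W ι : Type*} [DivisionRing K] [AddCommGroup V] [Module K V] [AddCommGroup W]
  [Module K W] {F : V → W} {v : ι → V}

theorem linearIndependent_comp (hv : LinearIndependent K v)
    (hinj : Function.Injective F) (hF0 : F 0 = 0) (hF : ∀ i, PreservesLinesAlong K F (v i)) :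
    LinearIndependent K (F ∘ v) := by
  rw [linearIndependent_iff_notMem_span] at hv ⊢
  intro i hi
  have himage := image_span hF0 (S := v '' (Set.univ \ {i}))
    (Set.forall_mem_image.2 fun j _ ↦ hF j)
  rw [Set.image_comp, ← SetLike.mem_coe, ← himage] at hi
  exact hv i (hinj.mem_set_image.1 hi)

end DivisionRing

end PreservesLinesAlong

theorem parallelism_lemma_general {K V W ι : Type*} [DivisionRing K] [AddCommGroup V] [Module K V]
    [AddCommGroup W] [Module K W] {F : V → W} {v : ι → V}
    (hv : LinearIndependent K v) (hinj : Function.Injective F) (hF0 : F 0 = 0)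
    (hF : ∀ i, PreservesLinesAlong K F (v i)) :
    LinearIndependent K (F ∘ v) ∧
      ∀ {κ : Type*} (e : κ → ι),
        F '' (span K (Set.range (v ∘ e)) : Set V) = (span K (Set.range (F ∘ v ∘ e)) : Set W) ∧
        ∀ a : V, F '' (a +ᵥ (span K (Set.range (v ∘ e)) : Set V)) =
          F a +ᵥ (span K (Set.range (F ∘ v ∘ e)) : Set W) := by
  refine ⟨PreservesLinesAlong.linearIndependent_comp hv hinj hF0 hF, fun e ↦ ?_⟩
  have he : ∀ u ∈ Set.range (v ∘ e), PreservesLinesAlong K F u :=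
    Set.forall_mem_range.2 fun k ↦ hF (e k)
  rw [Set.range_comp F]
  exact ⟨PreservesLinesAlong.image_span hF0 he, PreservesLinesAlong.image_vadd_span he⟩

theorem lineThru_eq_vadd_span {k : ℕ} (a b : Fin k → ℝ) :
    lineThru a b = a +ᵥ (ℝ ∙ b : Set (Fin k → ℝ)) := by
  ext x
  simp only [lineThru, ← setOf_exists_mem_eq_add, Set.mem_ofPred_eq, mem_span_singleton,
    exists_exists_eq_and]

/-- **Lemma (parallelism lemma).** Let `2 ≤ n ≤ m`, let `v₁,…,vₙ ∈ ℝⁿ` be linearly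
independent, and let `F : ℝⁿ → ℝᵐ` be injective with `F 0 = 0`, mapping each line in
`ℒ(v₁,…,vₙ)` onto a line, and mapping the family of lines parallel to `vᵢ` onto the
family of lines parallel to `F vᵢ`. Then for every `2 ≤ k ≤ n`:
(1) `F v₁, …, F v_k` are linearly independent;
(2) `F (span {v₁,…,v_k}) = span {F v₁,…,F v_k}`;
(3) `F (v_k + span {v₁,…,v_{k-1}}) = F v_k + span {F v₁,…,F v_{k-1}}`. -/
theorem parallelism_lemma
    {n m : ℕ} (hn : 2 ≤ n) (hnm : n ≤ m)
    (v : Fin n → (Fin n → ℝ)) (hv : LinearIndependent ℝ v)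
    (F : (Fin n → ℝ) → (Fin m → ℝ))
    (hinj : Function.Injective F) (hF0 : F 0 = 0)
    (honto : ∀ (i : Fin n) (a : Fin n → ℝ), IsLine (F '' lineThru a (v i)))
    (hpar : ∀ i : Fin n,
      (∀ a : Fin n → ℝ, ∃ c : Fin m → ℝ,
        F '' lineThru a (v i) = lineThru c (F (v i))) ∧
      (∀ c : Fin m → ℝ, ∃ a : Fin n → ℝ,
        F '' lineThru a (v i) = lineThru c (F (v i)))) :
    ∀ (k : ℕ) (_hk2 : 2 ≤ k) (hk : k ≤ n),
      LinearIndependent ℝ (fun i : Fin k => F (v (Fin.castLE hk i))) ∧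
      F '' (Submodule.span ℝ
          (Set.range fun i : Fin k => v (Fin.castLE hk i)) : Set (Fin n → ℝ)) =
        (Submodule.span ℝ
          (Set.range fun i : Fin k => F (v (Fin.castLE hk i))) : Set (Fin m → ℝ)) ∧
      F '' {z | ∃ y ∈ Submodule.span ℝ
              (Set.range fun i : Fin (k - 1) => v (Fin.castLE (by omega) i)),
            z = v (Fin.castLE hk ⟨k - 1, by omega⟩) + y} =
        {z | ∃ y ∈ Submodule.span ℝ
              (Set.range fun i : Fin (k - 1) => F (v (Fin.castLE (by omega) i))),
            z = F (v (Fin.castLE hk ⟨k - 1, by omega⟩)) + y} := by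
  intro k _ hk
  obtain ⟨hindep, himage⟩ := parallelism_lemma_general hv hinj hF0 fun i a ↦ by
    simpa only [lineThru_eq_vadd_span] using (hpar i).1 a
  simp only [setOf_exists_mem_eq_add]
  exact ⟨hindep.comp _ (Fin.castLE_injective hk), (himage (Fin.castLE hk)).1, (himage _).2 _⟩
end
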